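/- arXiv:2403.17953 — 5 statements merged into one kernel-verified Lean document; each statement's English description precedes it below -/
import Mathlib

section
/- The only solutions in nonnegative integers (n, x, y) with n ≠ 1 of the equation T_n = 2^x · 3^y are (n, x, y) = (2, 0, 0), (3, 1, 0), (4, 2, 0), (7, 3, 1) and (9, 0, 4); equivalently, 0 = T_2 − 2^0·3^0 = T_3 − 2^1·3^0 = T_4 − 2^2·3^0 = T_7 − 2^3·3^1 = T_9 − 2^0·3^4 are the only representations of 0 in the form T_n − 2^x·3^y. -/
/-!
Extend `T` to negative indices by running the recurrence backwards; the extension vanishes at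
`0, -1, -4, -17`. Let `M` be the companion matrix. If `M ^ P ≡ 1` modulo `p ^ (j + 1)`, then
`N ↦ T (a + P * N)` agrees with `T a + N * (T (a + P) - T a)` up to an error that is divisible by
`p ^ (2 * j + 1)` times the `p`-part of `N`. Hence, near a zero `a`, the `p`-part of `T (a + P * N)`
divides a constant times `N`, while on the residue classes modulo `P` that contain none of the four
zeros a finite computation shows it to be bounded. For `p = 2` and `p = 3` this makes the `p`-part
of `T n` at most linear in `n`, so `T n = 2 ^ x * 3 ^ y` would be `O(n ^ 2)`, contradicting
exponential growth except for small `n`.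
-/

/-- The Tribonacci sequence: `T 0 = 0`, `T 1 = T 2 = 1`,
`T (n+3) = T (n+2) + T (n+1) + T n`. -/
def T : ℕ → ℤ
  | 0 => 0
  | 1 => 1
  | 2 => 1
  | n + 3 => T (n + 2) + T (n + 1) + T n

namespace Tribonacci

section Lifting

variable {R : Type*} [Ring R]

lemma sub_one_sq_dvd_pow_sub_one_sub (A : R) (N : ℕ) :
    (A - 1) ^ 2 ∣ A ^ N - 1 - N * (A - 1) := by
  induction N with
  | zero => simp
  | succ N ih =>
    have expand : A ^ (N + 1) - 1 - (N + 1 : ℕ) * (A - 1) =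
        (A ^ N - 1 - N * (A - 1)) * A + (A - 1) ^ 2 * N := by
      rw [← (Nat.cast_commute N ((A - 1) ^ 2)).eq]
      push_cast
      noncomm_ring
    rw [expand]
    exact (ih.mul_right A).add (dvd_mul_right _ _)

lemma natCast_sq_dvd_pow_sub_one_sub {q : ℕ} {A : R} (hA : (q : R) ∣ A - 1) (N : ℕ) :
    (q : R) ^ 2 ∣ A ^ N - 1 - N * (A - 1) := by
  obtain ⟨B, hB⟩ := hA
  refine .trans ?_ (sub_one_sq_dvd_pow_sub_one_sub A N)
  rw [hB, (Nat.cast_commute q B).mul_pow]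
  exact dvd_mul_right _ _

lemma pow_add_dvd_natCast_mul {p i k N : ℕ} {X : R} (hN : p ^ k ∣ N) (hX : (p : R) ^ i ∣ X) :
    (p : R) ^ (k + i) ∣ N * X := by
  obtain ⟨m, rfl⟩ := hN
  obtain ⟨Y, rfl⟩ := hX
  refine ⟨m * Y, ?_⟩
  rw [Nat.cast_mul, Nat.cast_pow, (Nat.cast_commute m _).mul_mul_mul_comm, ← pow_add]

/-- Induction on `k`: as `A ^ N ≡ 1` modulo `p ^ (j + k + 1)`, the first-order expansion of
`(A ^ N) ^ p` has a negligible error, and its linear term carries the old error times `p`. -/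
lemma pow_dvd_pow_sub_one_sub {p j k N : ℕ} {A : R} (hA : (p : R) ^ (j + 1) ∣ A - 1)
    (hN : p ^ k ∣ N) : (p : R) ^ (2 * j + k + 1) ∣ A ^ N - 1 - N * (A - 1) := by
  induction k generalizing N with
  | zero =>
    have h := natCast_sq_dvd_pow_sub_one_sub (q := p ^ (j + 1)) (mod_cast hA) N
    rw [Nat.cast_pow, ← pow_mul] at h
    exact (pow_dvd_pow _ (by omega)).trans h
  | succ k ih =>
    obtain ⟨N, rfl, hN'⟩ : ∃ N', N = p * N' ∧ p ^ k ∣ N' := by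
      obtain ⟨m, rfl⟩ := hN
      exact ⟨p ^ k * m, by ring, dvd_mul_right _ _⟩
    have hAN : (p : R) ^ (k + (j + 1)) ∣ A ^ N - 1 :=
      (dvd_iff_dvd_of_dvd_sub ((pow_dvd_pow _ (by omega)).trans (ih hN'))).mpr
        (pow_add_dvd_natCast_mul hN' hA)
    have outer := natCast_sq_dvd_pow_sub_one_sub (q := p ^ (k + (j + 1))) (mod_cast hAN) p
    rw [Nat.cast_pow, ← pow_mul] at outer
    have inner : (p : R) ^ (1 + (2 * j + k + 1)) ∣ p * (A ^ N - 1 - N * (A - 1)) :=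
      pow_add_dvd_natCast_mul (pow_one p).dvd (ih hN')
    have split : A ^ (p * N) - 1 - (p * N : ℕ) * (A - 1) =
        ((A ^ N) ^ p - 1 - p * (A ^ N - 1)) + p * (A ^ N - 1 - N * (A - 1)) := by
      rw [mul_comm p N, pow_mul, mul_comm N p]
      push_cast
      noncomm_ring
    rw [split]
    exact ((pow_dvd_pow _ (by omega)).trans outer).add ((pow_dvd_pow _ (by omega)).trans inner)

lemma natCast_dvd_matrix_iff {ι : Type*} [Fintype ι] [DecidableEq ι] {q : ℕ} {X : Matrix ι ι R} :
    (q : Matrix ι ι R) ∣ X ↔ ∀ i j, (q : R) ∣ X i j := by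
  constructor
  · rintro ⟨Y, rfl⟩ i j
    exact ⟨Y i j, by simp [← nsmul_eq_mul]⟩
  · intro h
    choose Y hY using h
    exact ⟨Matrix.of Y, by ext i j; simp [← nsmul_eq_mul, hY]⟩

end Lifting

/-- The Tribonacci sequence at negative indices, counted from `-1`: `negT n` stands for
`T (-(n + 1))`. -/
def negT : ℕ → ℤ
  | 0 => 0
  | 1 => 1
  | 2 => -1
  | n + 3 => negT n - negT (n + 1) - negT (n + 2)

/-- The Tribonacci sequence extended to all integer indices. -/
def intT : ℤ → ℤ
  | .ofNat n => T n
  | .negSucc n => negT n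

lemma intT_natCast (n : ℕ) : intT n = T n := rfl

lemma intT_add_three (n : ℤ) : intT (n + 3) = intT (n + 2) + intT (n + 1) + intT n := by
  match n with
  | .ofNat n => rfl
  | .negSucc 0 => rfl
  | .negSucc 1 => rfl
  | .negSucc 2 => rfl
  | .negSucc (n + 3) =>
    change negT n = negT (n + 1) + negT (n + 2) + (negT n - negT (n + 1) - negT (n + 2))
    ring

/-- The companion matrix of the Tribonacci recurrence. -/
def companion : Matrix (Fin 3) (Fin 3) ℤ := !![0, 1, 0; 0, 0, 1; 1, 1, 1]

/-- The Hankel matrix of the extended Tribonacci sequence that starts at index `a`; multiplication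
by `companion` shifts it by one index. -/
def hankel (a : ℤ) : Matrix (Fin 3) (Fin 3) ℤ :=
  Matrix.of fun i j => intT (a + (i : ℕ) + (j : ℕ))

lemma companion_mul_hankel (a : ℤ) : companion * hankel a = hankel (a + 1) := by
  ext i j
  have recurrence := intT_add_three (a + (j : ℕ))
  fin_cases i <;> simp [companion, hankel, Matrix.mul_apply, Fin.sum_univ_three] <;> grind

lemma companion_pow_mul_hankel (N : ℕ) (a : ℤ) : companion ^ N * hankel a = hankel (a + N) := by
  induction N with
  | zero => simp
  | succ N ih =>
    rw [pow_succ', mul_assoc, ih, companion_mul_hankel]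
    push_cast
    rw [add_assoc]

lemma isUnit_hankel_zero : IsUnit (hankel 0) := by
  rw [Matrix.isUnit_iff_isUnit_det, Matrix.det_fin_three]
  decide

lemma natCast_dvd_companion_pow_sub_one_iff {q P : ℕ} :
    (q : Matrix (Fin 3) (Fin 3) ℤ) ∣ companion ^ P - 1 ↔
      ∀ i j : Fin 3, (q : ℤ) ∣ T (P + i + j) - T (i + j) := by
  rw [← isUnit_hankel_zero.dvd_mul_right, sub_mul, companion_pow_mul_hankel, one_mul, zero_add,
    natCast_dvd_matrix_iff]
  simp only [hankel, Matrix.sub_apply, Matrix.of_apply, zero_add, ← Nat.cast_add, intT_natCast]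

section Valuation

variable {p j P : ℕ} (hP : (p : Matrix (Fin 3) (Fin 3) ℤ) ^ (j + 1) ∣ companion ^ P - 1)
include hP

lemma pow_dvd_intT_sub_affine {k N : ℕ} (hN : p ^ k ∣ N) (a : ℤ) :
    (p : ℤ) ^ (2 * j + k + 1) ∣
      intT (a + P * N) - (intT a + N * (intT (a + P) - intT a)) := by
  have h := (pow_dvd_pow_sub_one_sub hP hN).mul_right (hankel a)
  rw [← pow_mul, sub_mul, sub_mul, one_mul, mul_assoc, sub_mul, one_mul,
    companion_pow_mul_hankel, companion_pow_mul_hankel, ← nsmul_eq_mul,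
    ← Nat.cast_pow, natCast_dvd_matrix_iff] at h
  simpa [hankel, sub_add_eq_sub_sub] using h 0 0

lemma not_pow_dvd_intT_of_constant {a : ℤ} {e : ℕ} (he : e ≤ 2 * j + 1)
    (ha : ¬ (p : ℤ) ^ e ∣ intT a) (hconst : (p : ℤ) ^ e ∣ intT (a + P) - intT a) (N : ℕ) :
    ¬ (p : ℤ) ^ e ∣ intT (a + P * N) := by
  intro h
  have affine := (pow_dvd_pow (p : ℤ) he).trans
    (pow_dvd_intT_sub_affine hP (k := 0) (by simp : p ^ 0 ∣ N) a)
  have value := (dvd_iff_dvd_of_dvd_sub affine).mp h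
  exact ha ((dvd_add_left (hconst.mul_left _)).mp value)

lemma pow_dvd_of_pow_dvd_intT (hp : p.Prime) {a : ℤ} (ha : intT a = 0)
    (haP : ¬ (p : ℤ) ^ (2 * j + 1) ∣ intT (a + P)) {N x : ℕ}
    (hx : (p : ℤ) ^ x ∣ intT (a + P * N)) : p ^ x ∣ p ^ (2 * j) * N := by
  obtain rfl | hN := eq_or_ne N 0
  · simp
  obtain ⟨k, m, hm, rfl⟩ := Nat.exists_eq_pow_mul_and_not_dvd hN p hp.ne_one
  suffices x ≤ 2 * j + k by
    rw [← mul_assoc, ← pow_add]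
    exact (pow_dvd_pow p this).mul_right m
  by_contra! hlt
  have affine := pow_dvd_intT_sub_affine hP (dvd_mul_right (p ^ k) m) a
  have value := (dvd_iff_dvd_of_dvd_sub affine).mp ((pow_dvd_pow _ hlt).trans hx)
  rw [ha, zero_add, sub_zero, show 2 * j + k + 1 = k + (2 * j + 1) by ring, pow_add,
    Nat.cast_mul, Nat.cast_pow, mul_assoc,
    mul_dvd_mul_iff_left (pow_ne_zero _ (mod_cast hp.ne_zero))] at value
  have coprime : IsCoprime ((p : ℤ) ^ (2 * j + 1)) m :=
    (Nat.isCoprime_iff_coprime.mpr (hp.coprime_iff_not_dvd.mpr hm)).pow_left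
  exact haP (coprime.dvd_of_dvd_mul_left value)

lemma pow_le_of_pow_dvd_T (hp : p.Prime) (hP0 : 0 < P) {Z : Finset ℕ} {C : ℕ}
    (hC : ∀ c ∈ Z, c ≤ C) (hzero : ∀ c ∈ Z, intT (-c) = 0)
    (hvalue : ∀ c ∈ Z, ¬ (p : ℤ) ^ (2 * j + 1) ∣ intT (-c + P))
    (hres : ∀ r < P, (∃ c ∈ Z, P ∣ r + c) ∨
      ∃ e < 2 * j + 2, ¬ (p : ℤ) ^ e ∣ T r ∧ (p : ℤ) ^ e ∣ T (r + P) - T r)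
    {n x : ℕ} (hn : 0 < n) (hx : (p : ℤ) ^ x ∣ T n) : p ^ x ≤ p ^ (2 * j) * (n + C) := by
  have pow_le (h : x ≤ 2 * j) : p ^ x ≤ p ^ (2 * j) * (n + C) :=
    (Nat.pow_le_pow_right hp.pos h).trans (Nat.le_mul_of_pos_right _ (by omega))
  obtain ⟨c, hc, hdvd⟩ | ⟨e, he, hne, hconst⟩ := hres (n % P) (Nat.mod_lt n hP0)
  · obtain ⟨N, hN⟩ := (((Nat.mod_modEq n P).add_right c).dvd_iff dvd_rfl).mp hdvd
    have index : -(c : ℤ) + P * N = n := by linarith [(mod_cast hN : (n + c : ℤ) = P * N)]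
    have hdvdN : p ^ x ∣ p ^ (2 * j) * N :=
      pow_dvd_of_pow_dvd_intT hP hp (hzero c hc) (hvalue c hc) (by rwa [index])
    have hNpos : 0 < N := Nat.pos_of_ne_zero (by rintro rfl; omega)
    calc p ^ x ≤ p ^ (2 * j) * N := Nat.le_of_dvd (by have := hp.pos; positivity) hdvdN
      _ ≤ p ^ (2 * j) * (P * N) := by gcongr; exact Nat.le_mul_of_pos_left N hP0
      _ ≤ p ^ (2 * j) * (n + C) := by rw [← hN]; gcongr; exact hC c hc
  · have hTn := not_pow_dvd_intT_of_constant hP (a := (n % P : ℕ)) (by omega) hne hconst (n / P)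
    rw [← Nat.cast_mul, ← Nat.cast_add, Nat.mod_add_div, intT_natCast] at hTn
    have hxe : x < e := by
      by_contra! hle
      exact hTn ((pow_dvd_pow _ hle).trans hx)
    exact pow_le (by omega)

end Valuation

/-- The indices `c` of the four zeros `-c` of `intT`. -/
def negZeros : Finset ℕ := {0, 1, 4, 17}

lemma le_of_mem_negZeros : ∀ c ∈ negZeros, c ≤ 17 := by decide

lemma intT_neg_of_mem_negZeros : ∀ c ∈ negZeros, intT (-c) = 0 := by decide +kernel

lemma two_pow_le_of_two_pow_dvd_T {n x : ℕ} (hn : 0 < n) (hx : 2 ^ x ∣ T n) :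
    2 ^ x ≤ 2 ^ 6 * (n + 17) := by
  have period : ((2 : ℕ) : Matrix (Fin 3) (Fin 3) ℤ) ^ (3 + 1) ∣ companion ^ 32 - 1 := by
    rw [← Nat.cast_pow, natCast_dvd_companion_pow_sub_one_iff]
    decide +kernel
  have near_zeros : ∀ c ∈ negZeros, ¬ 2 ^ 7 ∣ intT (-c + 32) := by decide +kernel
  have other_residues : ∀ r < 32, (∃ c ∈ negZeros, 32 ∣ r + c) ∨
      ∃ e < 8, ¬ 2 ^ e ∣ T r ∧ 2 ^ e ∣ T (r + 32) - T r := by decide +kernel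
  exact pow_le_of_pow_dvd_T period Nat.prime_two (by simp) le_of_mem_negZeros
    intT_neg_of_mem_negZeros near_zeros other_residues hn hx

lemma three_pow_le_of_three_pow_dvd_T {n y : ℕ} (hn : 0 < n) (hy : 3 ^ y ∣ T n) :
    3 ^ y ≤ 3 ^ 8 * (n + 17) := by
  -- The smaller period `351` modulo `3 ^ 4` is too coarse: `3 ^ 7` divides `T (351 - c)` for every
  -- `c ∈ negZeros`.
  have period : ((3 : ℕ) : Matrix (Fin 3) (Fin 3) ℤ) ^ (4 + 1) ∣ companion ^ 1053 - 1 := by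
    rw [← Nat.cast_pow, natCast_dvd_companion_pow_sub_one_iff]
    decide +kernel
  have near_zeros : ∀ c ∈ negZeros, ¬ 3 ^ 9 ∣ intT (-c + 1053) := by decide +kernel
  have other_residues : ∀ r < 1053, (∃ c ∈ negZeros, 1053 ∣ r + c) ∨
      ∃ e < 10, ¬ 3 ^ e ∣ T r ∧ 3 ^ e ∣ T (r + 1053) - T r := by decide +kernel
  exact pow_le_of_pow_dvd_T period Nat.prime_three (by simp) le_of_mem_negZeros
    intT_neg_of_mem_negZeros near_zeros other_residues hn hy

lemma lt_T_of_le_sum {f : ℕ → ℤ} {n₀ : ℕ} (h₀ : f n₀ < T n₀) (h₁ : f (n₀ + 1) < T (n₀ + 1))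
    (h₂ : f (n₀ + 2) < T (n₀ + 2)) (hf : ∀ n ≥ n₀, f (n + 3) ≤ f (n + 2) + f (n + 1) + f n) :
    ∀ n ≥ n₀, f n < T n := by
  suffices h : ∀ n ≥ n₀, f n < T n ∧ f (n + 1) < T (n + 1) ∧ f (n + 2) < T (n + 2) from
    fun n hn => (h n hn).1
  intro n hn
  induction n, hn using Nat.le_induction with
  | base => exact ⟨h₀, h₁, h₂⟩
  | succ n hn ih =>
    have hT : T (n + 3) = T (n + 2) + T (n + 1) + T n := rfl
    exact ⟨ih.2.1, ih.2.2, by linarith [hf n hn, ih.1, ih.2.1, ih.2.2]⟩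

lemma quadratic_lt_T {n : ℕ} (hn : 38 ≤ n) : 2 ^ 6 * (n + 17) * (3 ^ 8 * (n + 17)) < T n := by
  refine lt_T_of_le_sum (f := fun n => 2 ^ 6 * (n + 17) * (3 ^ 8 * (n + 17))) (n₀ := 38)
    (by decide +kernel) (by decide +kernel) (by decide +kernel) (fun m _ => ?_) n hn
  push_cast
  nlinarith

lemma filter_solutions :
    (Finset.range 38 ×ˢ Finset.range 12 ×ˢ Finset.range 12).filter
        (fun (n, x, y) => T n = 2 ^ x * 3 ^ y) =
      {(1, 0, 0), (2, 0, 0), (3, 1, 0), (4, 2, 0), (7, 3, 1), (9, 0, 4)} := by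
  decide +kernel

end Tribonacci

open Tribonacci in
theorem tribonacci_eq_two_pow_mul_three_pow (n x y : ℕ) (hn : n ≠ 1) :
    T n = 2 ^ x * 3 ^ y ↔
      (n, x, y) = (2, 0, 0) ∨ (n, x, y) = (3, 1, 0) ∨ (n, x, y) = (4, 2, 0) ∨
        (n, x, y) = (7, 3, 1) ∨ (n, x, y) = (9, 0, 4) := by
  constructor
  · intro h
    have n_pos : 0 < n := by
      rw [Nat.pos_iff_ne_zero]
      rintro rfl
      exact (by positivity : (2 : ℤ) ^ x * 3 ^ y ≠ 0) h.symm
    have hx : 2 ^ x ≤ 2 ^ 6 * (n + 17) := two_pow_le_of_two_pow_dvd_T n_pos (h ▸ dvd_mul_right _ _)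
    have hy : 3 ^ y ≤ 3 ^ 8 * (n + 17) :=
      three_pow_le_of_three_pow_dvd_T n_pos (h ▸ dvd_mul_left _ _)
    have n_lt : n < 38 := by
      by_contra! hge
      exact (quadratic_lt_T hge).not_ge (h ▸ mod_cast Nat.mul_le_mul hx hy)
    have x_lt : x < 12 := (Nat.pow_lt_pow_iff_right one_lt_two).mp (by omega : 2 ^ x < 2 ^ 12)
    have y_lt : y < 12 := (Nat.pow_lt_pow_iff_right (by simp)).mp (by omega : 3 ^ y < 3 ^ 12)
    have mem : (n, x, y) ∈ _ := filter_solutions.subset (by simp [n_lt, x_lt, y_lt, h])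
    simpa [hn] using mem
  · simp only [Prod.mk.injEq]
    rintro (⟨rfl, rfl, rfl⟩ | ⟨rfl, rfl, rfl⟩ | ⟨rfl, rfl, rfl⟩ | ⟨rfl, rfl, rfl⟩ |
      ⟨rfl, rfl, rfl⟩) <;> decide
end

section
/- There exists a unique element z of the field K = ℚ(α, β) (viewed as a subfield of ℂ) such that z³ = α/β. -/
/-!
A root `x` of `X³ - X² - X - 1` satisfies `(1 + x⁻¹)³ = 2x`, so `(1 + α⁻¹) / (1 + β⁻¹)` is a cube
root of `α / β`.

If cubing were not injective on `ℚ(α, β)`, this field would contain a primitive cube root of unity,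
hence a square root of `-3`. But `ℚ(α, β)` is generated over `ℚ(α)` by a square root of the
discriminant `-44` of the cubic, so `-3` or `-3 · -44 = 132` would be a square in `ℚ(α)`. As `ℚ(α)`
has odd degree over `ℚ`, one of the two would be a square in `ℚ`, which neither is.
-/

open IntermediateField Polynomial

section Squares

variable {F L : Type*} [Field F] [Field L] [Algebra F L]

lemma isSquare_of_isSquare_algebraMap_of_odd_finrank (hodd : Odd (Module.finrank F L)) {a : F}
    (ha : IsSquare (algebraMap F L a)) : IsSquare a := by
  by_contra hsq
  obtain ⟨s, hs⟩ := ha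
  have hirr : Irreducible (X ^ 2 - C a) :=
    X_pow_sub_C_irreducible_of_prime Nat.prime_two fun b hb ↦ hsq ⟨b, by rw [← hb, sq]⟩
  have hmonic : (X ^ 2 - C a).Monic := monic_X_pow_sub_C a two_ne_zero
  have hroot : aeval s (X ^ 2 - C a) = 0 := by simp [hs, sq]
  have hdvd := minpoly.degree_dvd (K := F) (x := s) ⟨_, hmonic, hroot⟩
  rw [← minpoly.eq_of_irreducible_of_monic hirr hroot hmonic, natDegree_X_pow_sub_C] at hdvd
  exact Nat.not_even_iff_odd.2 hodd (even_iff_two_dvd.2 hdvd)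

lemma exists_add_mul_eq_of_mem_adjoin_of_sq_eq {δ : L} {d : F} (hδ : δ ^ 2 = algebraMap F L d)
    {x : L} (hx : x ∈ F⟮δ⟯) : ∃ p q : F, algebraMap F L p + algebraMap F L q * δ = x := by
  have hmonic : (X ^ 2 - C d).Monic := monic_X_pow_sub_C d two_ne_zero
  have hroot : aeval δ (X ^ 2 - C d) = 0 := by simp [hδ]
  have hint : IsIntegral F δ := ⟨_, hmonic, hroot⟩
  rw [← mem_toSubalgebra, adjoin_simple_toSubalgebra_of_isAlgebraic hint.isAlgebraic,
    Algebra.adjoin_singleton_eq_range_aeval] at hx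
  obtain ⟨f, rfl⟩ := hx
  have hdeg : (f %ₘ (X ^ 2 - C d)).natDegree ≤ 1 := by
    have hlt := natDegree_modByMonic_lt f hmonic fun h ↦ by simpa using congrArg natDegree h
    rw [natDegree_X_pow_sub_C] at hlt
    lia
  obtain ⟨q, p, hqp⟩ := exists_eq_X_add_C_of_natDegree_le_one hdeg
  refine ⟨p, q, ?_⟩
  calc algebraMap F L p + algebraMap F L q * δ = aeval δ (f %ₘ (X ^ 2 - C d)) := by
        simp [hqp, add_comm]
    _ = aeval δ f := aeval_modByMonic_eq_self_of_root hroot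

variable (F L) in
lemma neZero_two_of_algebra [NeZero (2 : F)] : NeZero (2 : L) :=
  ⟨by simpa only [map_ofNat, map_zero] using (algebraMap F L).injective.ne two_ne_zero⟩

lemma isSquare_or_isSquare_mul_of_isSquare_adjoin_sqrt [NeZero (2 : F)] {δ : L} {d a : F}
    (hδ : δ ^ 2 = algebraMap F L d) (ha : IsSquare (algebraMap F F⟮δ⟯ a)) :
    IsSquare a ∨ IsSquare (a * d) := by
  obtain ⟨s, hs⟩ := ha
  obtain ⟨p, q, hpq⟩ := exists_add_mul_eq_of_mem_adjoin_of_sq_eq hδ s.2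
  have hinj := (algebraMap F L).injective
  have hsq : (algebraMap F L p + algebraMap F L q * δ) ^ 2 = algebraMap F L a := by
    rw [hpq, sq]
    exact congrArg (algebraMap F⟮δ⟯ L) hs.symm
  by_cases hp : p = 0
  · right
    refine ⟨q * d, hinj ?_⟩
    simp only [hp, map_zero, zero_add, mul_pow, hδ] at hsq
    simp only [map_mul, ← hsq]
    ring
  by_cases hq : q = 0
  · left
    refine ⟨p, hinj ?_⟩
    simpa [hq, sq] using hsq.symm
  -- The cross term `2pqδ` of the square is now a nonzero multiple of `δ`, so `δ` lies in `F`.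
  have hp' : algebraMap F L p ≠ 0 := by simpa using hp
  have hq' : algebraMap F L q ≠ 0 := by simpa using hq
  have := neZero_two_of_algebra F L
  have hδF : δ = algebraMap F L ((a - p ^ 2 - q ^ 2 * d) / (2 * p * q)) := by
    simp only [map_div₀, map_sub, map_mul, map_pow, map_ofNat]
    field_simp
    linear_combination hsq - algebraMap F L q ^ 2 * hδ
  left
  refine ⟨p + q * ((a - p ^ 2 - q ^ 2 * d) / (2 * p * q)), hinj ?_⟩
  rw [← hsq, sq, map_mul, map_add, map_mul, ← hδF]

end Squares

section Cubic

/-- For distinct roots `x` and `y` of `P`, with third root `z`, this is the square root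
`a² (x - y) (x - z) (y - z)` of the discriminant, written without `z`: the factors are `a (y - z)`
and `P'(x) = a (x - y) (x - z)`. -/
def sqrtDiscr {R : Type*} [CommRing R] (P : Cubic R) (x y : R) : R :=
  (2 * P.a * y + P.a * x + P.b) * (3 * P.a * x ^ 2 + 2 * P.b * x + P.c)

lemma sqrtDiscr_sq {R : Type*} [CommRing R] [IsDomain R] {P : Cubic R} {x y : R}
    (hx : P.toPoly.IsRoot x) (hy : P.toPoly.IsRoot y) (hxy : x ≠ y) :
    sqrtDiscr P x y ^ 2 = P.discr := by
  simp only [Cubic.toPoly, IsRoot.def, eval_add, eval_mul, eval_C, eval_pow, eval_X] at hx hy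
  have hquot : P.a * (x ^ 2 + x * y + y ^ 2) + P.b * (x + y) + P.c = 0 := by
    apply mul_left_cancel₀ (sub_ne_zero.2 hxy)
    linear_combination hx - hy
  have hfactor : (2 * P.a * y + P.a * x + P.b) ^ 2 =
      -3 * P.a ^ 2 * x ^ 2 - 2 * P.a * P.b * x + P.b ^ 2 - 4 * P.a * P.c := by
    linear_combination 4 * P.a * hquot
  simp only [sqrtDiscr, Cubic.discr, mul_pow, hfactor]
  linear_combination (-27 * P.a ^ 3 * x ^ 3 - 27 * P.a ^ 2 * P.b * x ^ 2 - 27 * P.a ^ 2 * P.c * x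
    + 4 * P.b ^ 3 - 18 * P.a * P.b * P.c + 27 * P.a ^ 2 * P.d) * hx

variable {F L : Type*} [Field F] [Field L] [Algebra F L]

lemma sqrtDiscr_map_algebraMap_sq {P : Cubic F} {x y : L} (hx : aeval x P.toPoly = 0)
    (hy : aeval y P.toPoly = 0) (hxy : x ≠ y) :
    sqrtDiscr (P.map (algebraMap F L)) x y ^ 2 = algebraMap F L P.discr := by
  rw [sqrtDiscr_sq (by rwa [Cubic.map_toPoly, IsRoot.def, eval_map_algebraMap])
    (by rwa [Cubic.map_toPoly, IsRoot.def, eval_map_algebraMap]) hxy]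
  simp only [Cubic.discr, Cubic.map, map_sub, map_add, map_mul, map_pow, map_ofNat]

lemma finrank_adjoin_root_cubic {P : Cubic F} (ha : P.a ≠ 0) (hP : Irreducible P.toPoly) {x : L}
    (hx : aeval x P.toPoly = 0) : Module.finrank F F⟮x⟯ = 3 := by
  have hint : IsIntegral F x := IsAlgebraic.isIntegral ⟨P.toPoly, hP.ne_zero, hx⟩
  rw [adjoin.finrank hint, ← Cubic.natDegree_of_a_ne_zero ha]
  exact natDegree_eq_of_degree_eq (degree_eq_degree_of_associated
    ((minpoly.irreducible hint).associated_of_dvd hP (minpoly.dvd F x hx)))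

lemma mem_of_sqrtDiscr_mem [NeZero (2 : F)] {P : Cubic F} (ha : P.a ≠ 0) {x y : L}
    (hne : sqrtDiscr (P.map (algebraMap F L)) x y ≠ 0) {K : IntermediateField F L} (hx : x ∈ K)
    (hK : sqrtDiscr (P.map (algebraMap F L)) x y ∈ K) : y ∈ K := by
  set Δ := sqrtDiscr (P.map (algebraMap F L)) x y with hΔ
  simp only [sqrtDiscr, Cubic.map] at hΔ
  set a := algebraMap F L P.a with ha_def
  set b := algebraMap F L P.b
  set c := algebraMap F L P.c
  have haK : a ∈ K := K.algebraMap_mem P.a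
  have hbK : b ∈ K := K.algebraMap_mem P.b
  have hcK : c ∈ K := K.algebraMap_mem P.c
  have hder : 3 * a * x ^ 2 + 2 * b * x + c ≠ 0 := right_ne_zero_of_mul (hΔ ▸ hne)
  have hderK : 3 * a * x ^ 2 + 2 * b * x + c ∈ K :=
    add_mem (add_mem (mul_mem (mul_mem (ofNat_mem K 3) haK) (pow_mem hx 2))
      (mul_mem (mul_mem (ofNat_mem K 2) hbK) hx)) hcK
  have ha0 : a ≠ 0 := by simpa [ha_def] using ha
  have := neZero_two_of_algebra F L
  have hy : y = (Δ / (3 * a * x ^ 2 + 2 * b * x + c) - a * x - b) / (2 * a) := by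
    rw [hΔ, mul_div_cancel_right₀ _ hder]
    field_simp
    ring
  rw [hy]
  exact div_mem (sub_mem (sub_mem (div_mem hK hderK) (mul_mem haK hx)) hbK)
    (mul_mem (ofNat_mem K 2) haK)

lemma adjoin_pair_le_adjoin_sqrtDiscr [NeZero (2 : F)] {P : Cubic F} (ha : P.a ≠ 0) {x y : L}
    (hne : sqrtDiscr (P.map (algebraMap F L)) x y ≠ 0) :
    F⟮x, y⟯ ≤ F⟮x⟯⟮sqrtDiscr (P.map (algebraMap F L)) x y⟯.restrictScalars F := by
  rw [adjoin_simple_adjoin_simple, adjoin_le_iff]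
  rintro z (rfl | rfl)
  · exact mem_adjoin_pair_left F _ _
  · exact mem_of_sqrtDiscr_mem ha hne (mem_adjoin_pair_left F _ _) (mem_adjoin_pair_right F _ _)

lemma isSquare_or_isSquare_mul_discr_of_isSquare_adjoin_pair [NeZero (2 : F)] {P : Cubic F}
    (ha : P.a ≠ 0) (hP : Irreducible P.toPoly) {x y : L} (hx : aeval x P.toPoly = 0)
    (hy : aeval y P.toPoly = 0) (hxy : x ≠ y) {e : F}
    (he : IsSquare (algebraMap F F⟮x, y⟯ e)) : IsSquare e ∨ IsSquare (e * P.discr) := by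
  have hodd : Odd (Module.finrank F F⟮x⟯) := by
    rw [finrank_adjoin_root_cubic ha hP hx]
    decide
  have := neZero_two_of_algebra F F⟮x⟯
  set Δ := sqrtDiscr (P.map (algebraMap F L)) x y
  have hΔ : Δ ^ 2 = algebraMap F L P.discr := sqrtDiscr_map_algebraMap_sq hx hy hxy
  rcases eq_or_ne P.discr 0 with hD | hD
  · simp [hD]
  have hΔ0 : Δ ≠ 0 := by
    rw [← pow_ne_zero_iff two_ne_zero, hΔ]
    simpa using hD
  have he' : IsSquare (algebraMap F⟮x⟯ F⟮x⟯⟮Δ⟯ (algebraMap F F⟮x⟯ e)) :=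
    he.map (inclusion (adjoin_pair_le_adjoin_sqrtDiscr ha hΔ0))
  rcases isSquare_or_isSquare_mul_of_isSquare_adjoin_sqrt
    (d := algebraMap F F⟮x⟯ P.discr) hΔ he' with h | h
  · exact .inl (isSquare_of_isSquare_algebraMap_of_odd_finrank hodd h)
  · rw [← map_mul] at h
    exact .inr (isSquare_of_isSquare_algebraMap_of_odd_finrank hodd h)

lemma irreducible_toPoly_map_of_forall_not_isRoot_zmod (p : ℕ) [Fact p.Prime] {P : Cubic ℤ}
    (ha : P.a = 1) (hP : ∀ x : ZMod p, ¬ (P.map (Int.castRingHom (ZMod p))).toPoly.IsRoot x) :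
    Irreducible (P.map (Int.castRingHom ℚ)).toPoly := by
  have hmonic : P.toPoly.Monic := Cubic.monic_of_a_eq_one ha
  have hdeg : (P.toPoly.map (Int.castRingHom (ZMod p))).natDegree = 3 := by
    rw [hmonic.natDegree_map, Cubic.natDegree_of_a_ne_zero (by simp [ha])]
  rw [Cubic.map_toPoly]
  refine (hmonic.irreducible_iff_irreducible_map_fraction_map (K := ℚ)).1 ?_
  refine hmonic.irreducible_of_irreducible_map (Int.castRingHom (ZMod p)) _ ?_
  rw [(hmonic.map _).irreducible_iff_roots_eq_zero_of_degree_le_three (by lia) (by lia),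
    Multiset.eq_zero_iff_forall_notMem]
  intro x hx
  have hroot := isRoot_of_mem_roots hx
  rw [← Cubic.map_toPoly] at hroot
  exact hP x hroot

end Cubic

lemma pow_three_injective_of_not_isSquare_neg_three {K : Type*} [Field K]
    (h : ¬ IsSquare (-3 : K)) : Function.Injective fun x : K ↦ x ^ 3 := by
  intro x y hxy
  by_contra hne
  have hquot : x ^ 2 + x * y + y ^ 2 = 0 := by
    apply mul_left_cancel₀ (sub_ne_zero.2 hne)
    linear_combination hxy
  have hy : y ≠ 0 := by
    rintro rfl
    exact hne (by simpa using hquot)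
  -- `x / y` is a primitive cube root of unity `ω`, and `(2ω + 1)² = -3`.
  refine h ⟨2 * (x / y) + 1, ?_⟩
  field_simp
  linear_combination -4 * hquot

section Tribonacci

/-- The integral cubic `X³ - X² - X - 1`, the characteristic polynomial of the Tribonacci
recurrence, as an element of Mathlib's `Cubic` so that its discriminant is available. -/
def tribonacciCubic : Cubic ℤ := ⟨1, -1, -1, -1⟩

lemma irreducible_tribonacciCubic :
    Irreducible (tribonacciCubic.map (Int.castRingHom ℚ)).toPoly := by
  refine irreducible_toPoly_map_of_forall_not_isRoot_zmod 3 rfl fun x ↦ ?_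
  simp only [tribonacciCubic, Cubic.map, Cubic.toPoly, IsRoot.def, eval_add, eval_mul, eval_C,
    eval_pow, eval_X]
  revert x
  decide

lemma discr_tribonacciCubic : (tribonacciCubic.map (Int.castRingHom ℚ)).discr = -44 := by
  norm_num [tribonacciCubic, Cubic.map, Cubic.discr]

lemma one_add_inv_pow_three {L : Type*} [Field L] {x : L} (hx : x ^ 3 = x ^ 2 + x + 1) :
    (1 + x⁻¹) ^ 3 = 2 * x := by
  have hx0 : x ≠ 0 := by
    rintro rfl
    simp at hx
  field_simp
  linear_combination (-1 - 2 * x) * hx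

lemma not_isSquare_neg_three_adjoin_tribonacci {L : Type*} [Field L] [Algebra ℚ L] {α β : L}
    (hα : α ^ 3 = α ^ 2 + α + 1) (hβ : β ^ 3 = β ^ 2 + β + 1) (hne : α ≠ β) :
    ¬ IsSquare (-3 : ℚ⟮α, β⟯) := by
  intro h
  have haeval {x : L} (hx : x ^ 3 = x ^ 2 + x + 1) :
      aeval x (tribonacciCubic.map (Int.castRingHom ℚ)).toPoly = 0 := by
    simp only [tribonacciCubic, Cubic.map, Cubic.toPoly, map_one, map_neg, map_add, map_mul,
      map_pow, aeval_X]
    linear_combination hx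
  have h3 : IsSquare (-3 : ℚ) ∨ IsSquare (-3 * (tribonacciCubic.map (Int.castRingHom ℚ)).discr) :=
    isSquare_or_isSquare_mul_discr_of_isSquare_adjoin_pair (by simp [tribonacciCubic, Cubic.map])
      irreducible_tribonacciCubic (haeval hα) (haeval hβ) hne (by simpa using h)
  rw [discr_tribonacciCubic] at h3
  norm_num at h3

theorem exists_unique_cube_root_alpha_div_beta_general {L : Type*} [Field L] [Algebra ℚ L]
    {α β : L} (hα : α ^ 3 = α ^ 2 + α + 1) (hβ : β ^ 3 = β ^ 2 + β + 1) (hne : α ≠ β) :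
    ∃! z : L, z ∈ adjoin ℚ ({α, β} : Set L) ∧ z ^ 3 = α / β := by
  have : CharZero L := algebraRat.charZero L
  have hcube : ((1 + α⁻¹) / (1 + β⁻¹)) ^ 3 = α / β := by
    rw [div_pow, one_add_inv_pow_three hα, one_add_inv_pow_three hβ,
      mul_div_mul_left _ _ two_ne_zero]
  have hmem : (1 + α⁻¹) / (1 + β⁻¹) ∈ ℚ⟮α, β⟯ :=
    div_mem (add_mem (one_mem _) (inv_mem (mem_adjoin_pair_left ℚ α β)))
      (add_mem (one_mem _) (inv_mem (mem_adjoin_pair_right ℚ α β)))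
  have hinj : Function.Injective fun z : ℚ⟮α, β⟯ ↦ z ^ 3 :=
    pow_three_injective_of_not_isSquare_neg_three
      (not_isSquare_neg_three_adjoin_tribonacci hα hβ hne)
  refine ⟨_, ⟨hmem, hcube⟩, fun y ⟨hy, hy3⟩ ↦ ?_⟩
  exact congrArg Subtype.val (@hinj ⟨y, hy⟩ ⟨_, hmem⟩ (Subtype.ext (hy3.trans hcube.symm)))

end Tribonacci

theorem exists_unique_cube_root_alpha_div_beta (α β : ℂ)
    (hαim : α.im = 0) (hα : α ^ 3 = α ^ 2 + α + 1)
    (hα1 : 1.83 < α.re) (hα2 : α.re < 1.84)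
    (hβ : β ^ 3 = β ^ 2 + β + 1) (hβim : β.im ≠ 0) :
    ∃! z : ℂ, z ∈ IntermediateField.adjoin ℚ ({α, β} : Set ℂ) ∧ z ^ 3 = α / β :=
  exists_unique_cube_root_alpha_div_beta_general hα hβ fun h ↦ hβim (h ▸ hαim)
end

section
/- Let z ∈ K = ℚ(α, β) satisfy z³ = α/β. Then for every integer m ≥ 2 there is no element y ∈ K with y^m = z, and there is no element y ∈ K with y^m = −z. -/
/-!
Suppose `y ∈ K` and `|y| ^ m = |z|`, and let `w = |y| ^ 2`, so that `w ^ m = |z| ^ 2 = α`. As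
`w = y * conj y` lies in `K`, we have `ℚ(α) ⊆ ℚ(w) ⊆ K ∩ ℝ ≠ K`, so `[ℚ(w) : ℚ] = 3`: it is a
multiple of `3` and a proper divisor of `[K : ℚ] ≤ 9`.

With `g = X ^ 3 - X ^ 2 - X - 1`, the minimal polynomial `f` of `w` over `ℤ` divides `g(X ^ m)`.
As `α` is the only real root of `g`, the real roots of `f` are among `w` and `-w`, and `-w` is not
one because `f` is irreducible of odd degree. Since `w > 1`, the integers `f(0)`, `f(1)`, `f(-1)`
are negative, and they divide `g(0) = -1`, `g(1) = -2`, `g(±1) = -2`. As `f(1)` and `f(-1)` have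
the same parity, only `f = X ^ 3 - X - 1` and `f = g` remain. In the first case `w` is the plastic
number, none of whose powers is `α`; in the second `w = α`, so `m = 1`.
-/

open Polynomial IntermediateField ComplexConjugate

section Polynomial

theorem exists_isRoot_le_of_eval_nonneg {p : ℝ[X]} (hp : p.Monic) (hodd : Odd p.natDegree)
    {x : ℝ} (hx : 0 ≤ p.eval x) : ∃ r ≤ x, p.IsRoot r := by
  have hdeg : (p.comp (-X)).natDegree = p.natDegree := by simp [natDegree_comp]
  have hlim : Filter.Tendsto (fun t ↦ (p.comp (-X)).eval t) .atTop .atBot := by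
    refine tendsto_atBot_of_leadingCoeff_nonpos _ ?_ ?_
    · exact natDegree_pos_iff_degree_pos.1 (hdeg ▸ hodd.pos)
    · simp [leadingCoeff_comp, hp.leadingCoeff, hodd.neg_one_pow]
  obtain ⟨t, htneg, htx⟩ :=
    ((hlim.eventually_lt_atBot 0).and (Filter.eventually_ge_atTop (-x))).exists
  have hneg : p.eval (-t) < 0 := by simpa using htneg
  obtain ⟨r, hr, hr0⟩ := intermediate_value_Icc (neg_le.1 htx) p.continuousOn ⟨hneg.le, hx⟩
  exact ⟨r, hr.2, hr0⟩

theorem aeval_neg_minpoly_ne_zero {F E : Type*} [Field F] [CharZero F] [Field E] [Algebra F E]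
    {x : E} (hx : IsIntegral F x) (hx0 : x ≠ 0) (hodd : Odd (minpoly F x).natDegree) :
    aeval (-x) (minpoly F x) ≠ 0 := by
  intro h
  have hminpoly : minpoly F x = minpoly F (-x) :=
    minpoly.eq_of_irreducible_of_monic (minpoly.irreducible hx) h (minpoly.monic hx)
  have hcomp : minpoly F x = -(minpoly F x).comp (-X) := by
    rwa [minpoly.neg, hodd.neg_one_pow, neg_one_mul] at hminpoly
  have heval : (minpoly F x).eval 0 = -(minpoly F x).eval 0 := by
    simpa using congrArg (eval 0) hcomp
  refine minpoly.coeff_zero_ne_zero hx hx0 ?_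
  rw [coeff_zero_eq_eval_zero]
  exact self_eq_neg.1 heval

theorem eq_or_eq_of_natDegree_eq_three {f : ℤ[X]} (hf : f.Monic) (hdeg : f.natDegree = 3)
    (h0 : f.eval 0 = -1) (h1 : f.eval 1 = -1 ∨ f.eval 1 = -2)
    (hneg1 : f.eval (-1) = -1 ∨ f.eval (-1) = -2) :
    f = X ^ 3 - X - 1 ∨ f = X ^ 3 - X ^ 2 - X - 1 := by
  have hlead : f.coeff 3 = 1 := hdeg ▸ hf.coeff_natDegree
  have hexpand : f = X ^ 3 + C (f.coeff 2) * X ^ 2 + C (f.coeff 1) * X + C (f.coeff 0) := by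
    conv_lhs => rw [f.as_sum_range_C_mul_X_pow, hdeg]
    simp only [Finset.sum_range_succ, Finset.sum_range_zero, hlead, map_one]
    ring
  generalize f.coeff 2 = a, f.coeff 1 = b, f.coeff 0 = c at hexpand
  subst hexpand
  simp only [eval_add, eval_mul, eval_pow, eval_X, eval_C] at h0 h1 hneg1
  -- `f(1) - f(-1) = 2 + 2 * b` has absolute value at most `1`, so `b = -1`
  obtain ⟨rfl, rfl, rfl | rfl⟩ : c = -1 ∧ b = -1 ∧ (a = 0 ∨ a = -1) := by omega
  · left
    simp only [map_neg, map_one, map_zero]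
    ring
  · right
    simp only [map_neg, map_one]
    ring

theorem finrank_adjoin_eq_natDegree_minpoly_int {F : Type*} [Field F] [CharZero F] {x : F}
    (hx : IsIntegral ℤ x) : Module.finrank ℚ ℚ⟮x⟯ = (minpoly ℤ x).natDegree := by
  rw [adjoin.finrank hx.tower_top, minpoly.isIntegrallyClosed_eq_field_fractions' ℚ hx,
    (minpoly.monic hx).natDegree_map]

end Polynomial

/-- The common minimal polynomial of `α`, `β`, `γ`. It has coefficients in `ℤ`, not `ℚ`, so that
divisibility of polynomials passes to the values at integers. -/
noncomputable def tribonacciPoly : ℤ[X] := X ^ 3 - X ^ 2 - X - 1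

namespace tribonacciPoly

theorem monic : tribonacciPoly.Monic := by
  unfold tribonacciPoly
  monicity!

theorem natDegree_eq : tribonacciPoly.natDegree = 3 := by
  unfold tribonacciPoly
  compute_degree!

theorem aeval_eq_zero_iff {R : Type*} [CommRing R] {x : R} :
    aeval x tribonacciPoly = 0 ↔ x ^ 3 = x ^ 2 + x + 1 := by
  simp only [tribonacciPoly, map_sub, map_pow, aeval_X, map_one]
  constructor <;> intro h <;> linear_combination h

theorem isIntegral_of_aeval {R : Type*} [CommRing R] {x : R} (hx : aeval x tribonacciPoly = 0) :
    IsIntegral ℤ x :=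
  ⟨tribonacciPoly, monic, hx⟩

theorem irreducible : Irreducible tribonacciPoly := by
  rw [monic.irreducible_iff_roots_eq_zero_of_degree_le_three
    (natDegree_eq ▸ by norm_num) natDegree_eq.le, Multiset.eq_zero_iff_forall_notMem]
  intro n hn
  have hroot : n ^ 3 = n ^ 2 + n + 1 := aeval_eq_zero_iff.1 (by simpa using (mem_roots'.1 hn).2)
  have hunit : n * (n ^ 2 - n - 1) = 1 := by linear_combination hroot
  rcases Int.eq_one_or_neg_one_of_mul_eq_one hunit with rfl | rfl <;> norm_num at hroot

section Field

variable {F : Type*} [Field F] [CharZero F] {x : F} {m : ℕ}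

theorem minpoly_eq (hx : aeval x tribonacciPoly = 0) : minpoly ℤ x = tribonacciPoly := by
  have hint := isIntegral_of_aeval hx
  exact eq_of_monic_of_associated (minpoly.monic hint) monic
    ((minpoly.prime_of_isIntegrallyClosed hint).irreducible.associated_of_dvd irreducible
      (minpoly.isIntegrallyClosed_dvd hint hx))

theorem finrank_adjoin_eq_three (hx : aeval x tribonacciPoly = 0) :
    Module.finrank ℚ ℚ⟮x⟯ = 3 := by
  rw [finrank_adjoin_eq_natDegree_minpoly_int (isIntegral_of_aeval hx), minpoly_eq hx,
    natDegree_eq]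

theorem ne_zero_of_aeval_pow (h : aeval (x ^ m) tribonacciPoly = 0) : m ≠ 0 := by
  rintro rfl
  have := aeval_eq_zero_iff.1 h
  norm_num at this

theorem isIntegral_of_aeval_pow (h : aeval (x ^ m) tribonacciPoly = 0) : IsIntegral ℤ x :=
  .of_pow (Nat.pos_of_ne_zero (ne_zero_of_aeval_pow h)) (isIntegral_of_aeval h)

theorem minpoly_dvd_expand (h : aeval (x ^ m) tribonacciPoly = 0) :
    minpoly ℤ x ∣ expand ℤ m tribonacciPoly :=
  minpoly.isIntegrallyClosed_dvd (isIntegral_of_aeval_pow h) (by rwa [expand_aeval])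

theorem eval_minpoly_dvd (h : aeval (x ^ m) tribonacciPoly = 0) (n : ℤ) :
    (minpoly ℤ x).eval n ∣ tribonacciPoly.eval (n ^ m) := by
  rw [← expand_eval]
  exact eval_dvd (minpoly_dvd_expand h)

end Field

theorem sum_eq_one_and_prod_eq_one {R : Type*} [CommRing R] [IsDomain R] {α β γ : R}
    (hα : aeval α tribonacciPoly = 0) (hβ : aeval β tribonacciPoly = 0)
    (hγ : aeval γ tribonacciPoly = 0) (hαβ : α ≠ β) (hαγ : α ≠ γ) (hβγ : β ≠ γ) :
    α + β + γ = 1 ∧ α * β * γ = 1 := by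
  rw [aeval_eq_zero_iff] at hα hβ hγ
  have quadratic {x y : R} (hx : x ^ 3 = x ^ 2 + x + 1) (hy : y ^ 3 = y ^ 2 + y + 1)
      (hxy : x ≠ y) : x ^ 2 + x * y + y ^ 2 = x + y + 1 :=
    mul_left_cancel₀ (sub_ne_zero.2 hxy) (by linear_combination hx - hy)
  have hsum : α + β + γ = 1 :=
    mul_left_cancel₀ (sub_ne_zero.2 hβγ)
      (by linear_combination quadratic hα hβ hαβ - quadratic hα hγ hαγ)
  obtain rfl : γ = 1 - α - β := by linear_combination hsum
  exact ⟨hsum, by linear_combination hα - α * quadratic hα hβ hαβ⟩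

section Real

variable {x w : ℝ} {m : ℕ}

theorem one_lt_of_aeval (hx : aeval x tribonacciPoly = 0) : 1 < x := by
  rw [aeval_eq_zero_iff] at hx
  by_contra! h
  -- the local maximum of the cubic, at `-1 / 3`, is negative
  nlinarith [mul_nonneg (show 0 ≤ 5 / 3 - x by linarith) (sq_nonneg (x + 1 / 3))]

theorem lt_two_of_aeval (hx : aeval x tribonacciPoly = 0) : x < 2 := by
  rw [aeval_eq_zero_iff] at hx
  by_contra! h
  nlinarith [mul_nonneg (sub_nonneg.2 h) (sq_nonneg x)]

theorem eq_of_aeval_real {y : ℝ} (hx : aeval x tribonacciPoly = 0)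
    (hy : aeval y tribonacciPoly = 0) : x = y := by
  have hx1 := one_lt_of_aeval hx
  have hy1 := one_lt_of_aeval hy
  rw [aeval_eq_zero_iff] at hx hy
  by_contra hxy
  have hquad : x ^ 2 + x * y + y ^ 2 = x + y + 1 :=
    mul_left_cancel₀ (sub_ne_zero.2 hxy) (by linear_combination hx - hy)
  nlinarith

theorem one_lt_of_aeval_pow (hw : 0 ≤ w) (h : aeval (w ^ m) tribonacciPoly = 0) : 1 < w :=
  (one_lt_pow_iff_of_nonneg hw (ne_zero_of_aeval_pow h)).1 (one_lt_of_aeval h)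

theorem eq_or_eq_neg_of_aeval_minpoly {r : ℝ} (h : aeval (w ^ m) tribonacciPoly = 0)
    (hr : aeval r (minpoly ℤ w) = 0) : r = w ∨ r = -w := by
  have hrm : aeval (r ^ m) tribonacciPoly = 0 := by
    rw [← expand_aeval]
    exact aeval_eq_zero_of_dvd_aeval_eq_zero (minpoly_dvd_expand h) hr
  exact ((pow_eq_pow_iff_of_ne_zero (ne_zero_of_aeval_pow h)).1 (eq_of_aeval_real hrm h)).imp_right
    And.left

theorem eval_minpoly_neg (hw : 0 ≤ w) (hodd : Odd (minpoly ℤ w).natDegree)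
    (h : aeval (w ^ m) tribonacciPoly = 0) {n : ℤ} (hn : n < w) :
    (minpoly ℤ w).eval n < 0 := by
  have hint := isIntegral_of_aeval_pow h
  have hw0 : w ≠ 0 := (zero_lt_one.trans (one_lt_of_aeval_pow hw h)).ne'
  by_contra! hnonneg
  obtain ⟨r, hrn, hr⟩ : ∃ r ≤ (n : ℝ), ((minpoly ℤ w).map (algebraMap ℤ ℝ)).IsRoot r :=
    exists_isRoot_le_of_eval_nonneg ((minpoly.monic hint).map _)
      (by rwa [(minpoly.monic hint).natDegree_map]) (by simpa using hnonneg)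
  rw [IsRoot.def, eval_map_algebraMap] at hr
  rcases eq_or_eq_neg_of_aeval_minpoly h hr with rfl | rfl
  · exact hn.not_ge hrn
  · have hmap := minpoly.isIntegrallyClosed_eq_field_fractions' ℚ hint
    refine aeval_neg_minpoly_ne_zero (F := ℚ) hint.tower_top hw0 ?_ ?_
    · rwa [hmap, (minpoly.monic hint).natDegree_map]
    · rwa [hmap, aeval_map_algebraMap]

theorem minpoly_eq_or_eq (hw : 0 ≤ w) (hdeg : (minpoly ℤ w).natDegree = 3)
    (h : aeval (w ^ m) tribonacciPoly = 0) :
    minpoly ℤ w = X ^ 3 - X - 1 ∨ minpoly ℤ w = tribonacciPoly := by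
  have hw1 := one_lt_of_aeval_pow hw h
  have hneg {n : ℤ} (hn : n ≤ 1) : (minpoly ℤ w).eval n < 0 :=
    eval_minpoly_neg hw (hdeg ▸ by decide) h (lt_of_le_of_lt (by exact_mod_cast hn) hw1)
  have heq_of_dvd_two {a : ℤ} (ha : a < 0) (hdvd : a ∣ -2) : a = -1 ∨ a = -2 := by
    have := Int.le_of_dvd two_pos (neg_dvd.2 (dvd_neg.1 hdvd))
    omega
  refine eq_or_eq_of_natDegree_eq_three (minpoly.monic (isIntegral_of_aeval_pow h)) hdeg ?_ ?_ ?_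
  · have hdvd := eval_minpoly_dvd h 0
    simp only [zero_pow (ne_zero_of_aeval_pow h), tribonacciPoly, eval_sub, eval_pow, eval_X,
      eval_one] at hdvd
    have hunit := Int.isUnit_iff.1 (isUnit_of_dvd_unit hdvd (by decide))
    have := hneg zero_le_one
    omega
  · exact heq_of_dvd_two (hneg le_rfl) (by simpa [tribonacciPoly] using eval_minpoly_dvd h 1)
  · refine heq_of_dvd_two (hneg (by decide)) ?_
    rcases neg_one_pow_eq_or ℤ m with hm | hm <;>
      simpa [tribonacciPoly, hm] using eval_minpoly_dvd h (-1)

theorem aeval_plastic_pow_ne_zero (hw : 1 < w) (hw3 : w ^ 3 = w + 1) :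
    aeval (w ^ m) tribonacciPoly ≠ 0 := by
  intro h
  have hroot := aeval_eq_zero_iff.1 h
  match m with
  | 0 => norm_num at hroot
  | 1 => nlinarith
  | 2 =>
    have : w * (w - 1) = 0 := by linear_combination (w ^ 3 + 1) * hw3 - hroot
    nlinarith
  | n + 3 => linarith [lt_two_of_aeval h, pow_le_pow_right₀ hw.le (Nat.le_add_left 3 n)]

theorem eq_one_of_aeval_pow (hw : 0 ≤ w) (hdeg : (minpoly ℤ w).natDegree = 3)
    (h : aeval (w ^ m) tribonacciPoly = 0) : m = 1 := by
  have hw1 := one_lt_of_aeval_pow hw h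
  have hroot := minpoly.aeval ℤ w
  rcases minpoly_eq_or_eq hw hdeg h with hplastic | htribonacci
  · simp only [hplastic, map_sub, map_pow, aeval_X, map_one] at hroot
    exact absurd h (aeval_plastic_pow_ne_zero hw1 (by linear_combination hroot))
  · rw [htribonacci] at hroot
    refine pow_right_injective₀ (zero_lt_one.trans hw1) hw1.ne' ?_
    simpa only [pow_one] using eq_of_aeval_real h hroot

end Real

section Complex

theorem add_conj_eq_one_and_mul_normSq_eq_one {α : ℝ} {β : ℂ}
    (hα : aeval (α : ℂ) tribonacciPoly = 0) (hβ : aeval β tribonacciPoly = 0) (hβim : β.im ≠ 0) :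
    α + β + conj β = 1 ∧ α * Complex.normSq β = 1 := by
  have hγ : aeval (conj β) tribonacciPoly = 0 := by
    rw [aeval_eq_zero_iff] at hβ ⊢
    simpa using congrArg conj hβ
  have hαβ : (α : ℂ) ≠ β := by
    rintro rfl
    exact hβim (Complex.ofReal_im α)
  have hαγ : (α : ℂ) ≠ conj β := fun h ↦ hαβ (by simpa using congrArg conj h)
  have hβγ : β ≠ conj β := fun h ↦ hβim (Complex.conj_eq_iff_im.1 h.symm)
  obtain ⟨hsum, hprod⟩ := sum_eq_one_and_prod_eq_one hα hβ hγ hαβ hαγ hβγ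
  rw [mul_assoc, Complex.mul_conj] at hprod
  exact ⟨hsum, by exact_mod_cast hprod⟩

theorem conj_mem_adjoin {α : ℝ} {β y : ℂ} (hα : aeval (α : ℂ) tribonacciPoly = 0)
    (hβ : aeval β tribonacciPoly = 0) (hβim : β.im ≠ 0) (hy : y ∈ ℚ⟮(α : ℂ), β⟯) :
    conj y ∈ ℚ⟮(α : ℂ), β⟯ := by
  have hαmem := mem_adjoin_pair_left ℚ (α : ℂ) β
  have hβmem := mem_adjoin_pair_right ℚ (α : ℂ) β
  have hconjβ : conj β = 1 - α - β := by
    linear_combination (add_conj_eq_one_and_mul_normSq_eq_one hα hβ hβim).1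
  have hle : ℚ⟮(α : ℂ), β⟯ ≤
      ℚ⟮(α : ℂ), β⟯.comap ((Complex.conjAe : ℂ →ₐ[ℝ] ℂ).restrictScalars ℚ) := by
    have hα' : conj (α : ℂ) ∈ ℚ⟮(α : ℂ), β⟯ := by rwa [Complex.conj_ofReal]
    have hβ' : conj β ∈ ℚ⟮(α : ℂ), β⟯ := by
      rw [hconjβ]
      exact sub_mem (sub_mem (one_mem _) hαmem) hβmem
    exact adjoin_le_iff.2 (Set.insert_subset hα' (Set.singleton_subset_iff.2 hβ'))
  exact hle hy

theorem finrank_adjoin_pair_le_nine {α β : ℂ} (hα : aeval α tribonacciPoly = 0)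
    (hβ : aeval β tribonacciPoly = 0) : Module.finrank ℚ ℚ⟮α, β⟯ ≤ 9 := by
  have h := finrank_sup_le (E1 := ℚ⟮α⟯) (E2 := ℚ⟮β⟯)
  rwa [← adjoin_union, Set.singleton_union, finrank_adjoin_eq_three hα,
    finrank_adjoin_eq_three hβ] at h

theorem adjoin_ofReal_ne {x : ℝ} {β : ℂ} (hβim : β.im ≠ 0) {L : IntermediateField ℚ ℂ}
    (hβ : β ∈ L) : ℚ⟮(x : ℂ)⟯ ≠ L := by
  rintro rfl
  have hreal : ℚ⟮(x : ℂ)⟯ ≤ (Complex.ofRealAm.restrictScalars ℚ).fieldRange :=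
    adjoin_simple_le_iff.2 ⟨x, rfl⟩
  obtain ⟨r, rfl⟩ := hreal hβ
  exact hβim (Complex.ofReal_im r)

theorem finrank_adjoin_ofReal_eq_three {x : ℝ} {α β : ℂ} (hα : aeval α tribonacciPoly = 0)
    (hβ : aeval β tribonacciPoly = 0) (hβim : β.im ≠ 0) (hx : (x : ℂ) ∈ ℚ⟮α, β⟯)
    (hαx : α ∈ ℚ⟮(x : ℂ)⟯) : Module.finrank ℚ ℚ⟮(x : ℂ)⟯ = 3 := by
  have hle : ℚ⟮(x : ℂ)⟯ ≤ ℚ⟮α, β⟯ := adjoin_simple_le_iff.2 hx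
  have : FiniteDimensional ℚ ℚ⟮α, β⟯ := finiteDimensional_adjoin_pair
    (isIntegral_of_aeval hα).tower_top (isIntegral_of_aeval hβ).tower_top
  have hne : Module.finrank ℚ ℚ⟮(x : ℂ)⟯ ≠ Module.finrank ℚ ℚ⟮α, β⟯ := fun h ↦
    adjoin_ofReal_ne hβim (mem_adjoin_pair_right ℚ α β) (eq_of_le_of_finrank_eq hle h)
  have hpos : 0 < Module.finrank ℚ ℚ⟮α, β⟯ := Module.finrank_pos
  obtain ⟨c, hc⟩ : 3 ∣ Module.finrank ℚ ℚ⟮(x : ℂ)⟯ := by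
    rw [← finrank_adjoin_eq_three hα]
    exact finrank_dvd_of_le_right (adjoin_simple_le_iff.2 hαx)
  obtain ⟨d, hd⟩ := finrank_dvd_of_le_right hle
  have hnine := finrank_adjoin_pair_le_nine hα hβ
  rw [hd, hc] at hne hpos hnine
  have hc0 : c ≠ 0 := by
    rintro rfl
    omega
  have hd2 : 2 ≤ d := by
    by_contra! hlt
    interval_cases d <;> omega
  have hc1 : c = 1 := by
    have := Nat.mul_le_mul_left (3 * c) hd2
    omega
  rw [hc, hc1]

theorem normSq_eq_of_pow_three_eq {α : ℝ} {β z : ℂ} (hα : aeval (α : ℂ) tribonacciPoly = 0)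
    (hβ : aeval β tribonacciPoly = 0) (hβim : β.im ≠ 0) (hz : z ^ 3 = α / β) :
    Complex.normSq z = α := by
  obtain ⟨-, hprod⟩ := add_conj_eq_one_and_mul_normSq_eq_one hα hβ hβim
  have hβ0 : Complex.normSq β ≠ 0 := right_ne_zero_of_mul_eq_one hprod
  have hcube : Complex.normSq z ^ 3 = α ^ 3 := by
    rw [← map_pow, hz, map_div₀, Complex.normSq_ofReal, div_eq_iff hβ0]
    linear_combination -α ^ 2 * hprod
  exact (Odd.pow_inj (by decide)).1 hcube

end Complex

end tribonacciPoly

open tribonacciPoly in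
theorem cube_root_not_perfect_power_general {α : ℝ} {β z : ℂ} (hα : α ^ 3 = α ^ 2 + α + 1)
    (hβ : β ^ 3 = β ^ 2 + β + 1) (hβim : β.im ≠ 0) (hz : z ^ 3 = α / β) {m : ℕ} (hm : 2 ≤ m)
    {y : ℂ} (hy : y ∈ ℚ⟮(α : ℂ), β⟯) : ‖y‖ ^ m ≠ ‖z‖ := by
  intro hym
  have hαroot : aeval (α : ℂ) tribonacciPoly = 0 := aeval_eq_zero_iff.2 (by exact_mod_cast hα)
  have hβroot : aeval β tribonacciPoly = 0 := aeval_eq_zero_iff.2 hβ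
  have hpow : Complex.normSq y ^ m = α := by
    rw [← normSq_eq_of_pow_three_eq hαroot hβroot hβim hz, Complex.normSq_eq_norm_sq,
      Complex.normSq_eq_norm_sq, ← hym, pow_right_comm]
  have hmem : (Complex.normSq y : ℂ) ∈ ℚ⟮(α : ℂ), β⟯ := by
    rw [← Complex.mul_conj]
    exact mul_mem hy (conj_mem_adjoin hαroot hβroot hβim hy)
  have hαmem : (α : ℂ) ∈ ℚ⟮(Complex.normSq y : ℂ)⟯ := by
    rw [← hpow, Complex.ofReal_pow]
    exact pow_mem (mem_adjoin_simple_self ℚ _) m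
  have hroot : aeval (Complex.normSq y ^ m) tribonacciPoly = 0 := by
    rwa [hpow, aeval_eq_zero_iff]
  have hdeg : (minpoly ℤ (Complex.normSq y)).natDegree = 3 := by
    rw [← minpoly.algebraMap_eq (algebraMap ℝ ℂ).injective,
      ← finrank_adjoin_eq_natDegree_minpoly_int (isIntegral_of_aeval_pow hroot).algebraMap]
    exact finrank_adjoin_ofReal_eq_three hαroot hβroot hβim hmem hαmem
  have := eq_one_of_aeval_pow (Complex.normSq_nonneg y) hdeg hroot
  omega

theorem cube_root_not_perfect_power (α β z : ℂ)
    (hαim : α.im = 0) (hα : α ^ 3 = α ^ 2 + α + 1)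
    (hα1 : 1.83 < α.re) (hα2 : α.re < 1.84)
    (hβ : β ^ 3 = β ^ 2 + β + 1) (hβim : β.im ≠ 0)
    (hzmem : z ∈ IntermediateField.adjoin ℚ ({α, β} : Set ℂ))
    (hz : z ^ 3 = α / β)
    (m : ℕ) (hm : 2 ≤ m) :
    (¬ ∃ y ∈ IntermediateField.adjoin ℚ ({α, β} : Set ℂ), y ^ m = z) ∧
      (¬ ∃ y ∈ IntermediateField.adjoin ℚ ({α, β} : Set ℂ), y ^ m = -z) := by
  lift α to ℝ using hαim
  have hne {y : ℂ} (hy : y ∈ ℚ⟮(α : ℂ), β⟯) : ‖y‖ ^ m ≠ ‖z‖ :=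
    cube_root_not_perfect_power_general (by exact_mod_cast hα) hβ hβim hz hm hy
  exact ⟨fun ⟨y, hy, hyz⟩ ↦ hne hy (by rw [← norm_pow, hyz]),
    fun ⟨y, hy, hyz⟩ ↦ hne hy (by rw [← norm_pow, hyz, norm_neg])⟩
end

section
/- Let z ∈ K = ℚ(α, β) satisfy z³ = α/β. Then z⁶ + z⁵ + 2z⁴ + 3z³ + 2z² + z + 1 = 0, and the polynomial Q(X) = X⁶ + X⁵ + 2X⁴ + 3X³ + 2X² + X + 1 is irreducible over ℚ; that is, Q is the minimal polynomial of z over ℚ. -/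
/-!
Let `γ = 1 - α - β` be the third root of `X³ - X² - X - 1`. Since
`α / β + β / α = -γ³ + 3γ`, an element `z` with `z³ = α / β` satisfies
`(z² + γ z + 1) (z⁴ - γ z³ + (γ² - 1) z² - γ z + 1) = 0`. If the second factor vanishes, then
`y = 2 (z + z⁻¹) - γ` has `y² = -3 (γ² - 4)`, and `γ² - 4` is `-11` times a square in `ℚ(γ)`,
so `33` is a square in `ℚ(α, β)`. The latter field is `ℚ(γ)(√-44)`, because the cubic has
discriminant `-44`. Hence `33` or `-44 · 33` would be a square in the cubic field `ℚ(γ)`, and,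
taking norms, in `ℚ`, which is absurd.

Therefore `z + z⁻¹ = -γ`, and `Q(z) = 0` because `Q(X) = X³ (U³ + U² - U + 1)` with
`U = X + X⁻¹`. Now `γ`, `β = (1 - γ) / (1 + z³)` and `α = z³ β` all lie in `ℚ(z)`, so its degree
is divisible by `3`, and also by `2` since a number field of odd degree contains no square root
of `-44`.
-/

open Polynomial IntermediateField Module

section Squares

variable {F K : Type*} [Field F] [Field K] [Algebra F K]

lemma isSquare_of_isSquare_algebraMap_of_odd_finrank_s7 (hodd : Odd (finrank F K)) {c : F}
    (hc : IsSquare (algebraMap F K c)) : IsSquare c := by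
  obtain ⟨k, hk⟩ := hodd
  have hpow : IsSquare (c ^ (2 * k + 1)) := by
    rw [← hk, ← Algebra.norm_algebraMap]
    exact hc.map (Algebra.norm F)
  rcases eq_or_ne c 0 with rfl | hc0
  · exact IsSquare.zero
  · have hdiv : c = c ^ (2 * k + 1) / (c ^ k) ^ 2 := by field_simp; ring
    rw [hdiv]
    exact hpow.div (IsSquare.sq _)

lemma isSquare_of_sq_eq_of_odd_finrank {E : IntermediateField F K} (hodd : Odd (finrank F E))
    {c : F} {x : K} (hx : x ∈ E) (hxc : x ^ 2 = algebraMap F K c) : IsSquare c :=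
  isSquare_of_isSquare_algebraMap_of_odd_finrank_s7 hodd
    ⟨⟨x, hx⟩, Subtype.ext (by simpa [sq] using hxc.symm)⟩

lemma exists_eq_add_mul_of_mem_adjoin_sqrt {d : F} {δ x : K} (hδ : δ ^ 2 = algebraMap F K d)
    (hx : x ∈ F⟮δ⟯) : ∃ u v : F, x = algebraMap F K u + algebraMap F K v * δ := by
  have hint : IsIntegral F δ := .of_pow two_pos (hδ ▸ isIntegral_algebraMap)
  rw [← mem_toSubalgebra, adjoin_simple_toSubalgebra_of_isAlgebraic hint.isAlgebraic] at hx
  induction hx using Algebra.adjoin_induction with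
  | mem x hx => exact ⟨0, 1, by simpa using hx⟩
  | algebraMap r => exact ⟨r, 0, by simp⟩
  | add x y _ _ hx hy =>
    obtain ⟨u, v, rfl⟩ := hx
    obtain ⟨s, t, rfl⟩ := hy
    exact ⟨u + s, v + t, by simp only [map_add]; ring⟩
  | mul x y _ _ hx hy =>
    obtain ⟨u, v, rfl⟩ := hx
    obtain ⟨s, t, rfl⟩ := hy
    refine ⟨u * s + d * (v * t), u * t + v * s, ?_⟩
    simp only [map_add, map_mul]
    linear_combination algebraMap F K v * algebraMap F K t * hδ

lemma isSquare_or_isSquare_mul_of_mem_adjoin_sqrt [NeZero (2 : F)] {c d : F} {δ x : K}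
    (hδ : δ ^ 2 = algebraMap F K d) (hx : x ∈ F⟮δ⟯) (hxc : x ^ 2 = algebraMap F K c) :
    IsSquare c ∨ IsSquare (c * d) := by
  have hinj := (algebraMap F K).injective
  by_cases hmem : ∃ e, algebraMap F K e = δ
  · obtain ⟨e, rfl⟩ := hmem
    obtain ⟨u, v, rfl⟩ := exists_eq_add_mul_of_mem_adjoin_sqrt hδ hx
    exact .inl ⟨u + v * e, hinj (by rw [← hxc]; simp only [map_add, map_mul]; ring)⟩
  obtain ⟨u, v, rfl⟩ := exists_eq_add_mul_of_mem_adjoin_sqrt hδ hx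
  have hexpand : algebraMap F K (2 * u * v) * δ = algebraMap F K (c - u ^ 2 - d * v ^ 2) := by
    simp only [map_sub, map_mul, map_pow, map_ofNat]
    linear_combination hxc - algebraMap F K v ^ 2 * hδ
  have huv : 2 * u * v = 0 := by
    by_contra hne
    refine hmem ⟨(c - u ^ 2 - d * v ^ 2) / (2 * u * v), ?_⟩
    rw [map_div₀, ← hexpand, mul_div_cancel_left₀ _ (by simpa using hne)]
  have hc : c = u ^ 2 + d * v ^ 2 := by
    rw [huv, map_zero, zero_mul] at hexpand
    linear_combination hinj ((map_zero _).trans hexpand).symm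
  rcases mul_eq_zero.1 huv with h2u | rfl
  · have hu : u = 0 := (mul_eq_zero.1 h2u).resolve_left two_ne_zero
    exact .inr ⟨d * v, by rw [hc, hu]; ring⟩
  · exact .inl ⟨u, by rw [hc]; ring⟩

end Squares

section Cubic

lemma irreducible_tribonacci : Irreducible (X ^ 3 - X ^ 2 - X - 1 : ℚ[X]) := by
  have hdeg : (X ^ 3 - X ^ 2 - X - 1 : ℚ[X]).natDegree = 3 := by compute_degree!
  have hmonic : (X ^ 3 - X ^ 2 - X - 1 : ℚ[X]).Monic := by monicity!
  rw [hmonic.irreducible_iff_roots_eq_zero_of_degree_le_three (by lia) (by lia),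
    Multiset.eq_zero_iff_forall_notMem]
  intro r hr
  have hr0 : r ^ 3 - r ^ 2 - r - 1 = 0 := by simpa [IsRoot] using (mem_roots'.1 hr).2
  have hint : IsIntegral ℤ r := ⟨X ^ 3 - X ^ 2 - X - 1, by monicity!, by simpa using hr0⟩
  obtain ⟨n, rfl⟩ := IsIntegrallyClosed.isIntegral_iff.1 hint
  have hn : n ^ 3 - n ^ 2 - n - 1 = 0 := by
    rw [eq_intCast] at hr0
    exact_mod_cast hr0
  have hdvd : n ∣ 1 := ⟨n ^ 2 - n - 1, by linarith⟩
  rcases Int.isUnit_iff.1 (isUnit_of_dvd_one hdvd) with rfl | rfl <;> norm_num at hn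

variable {K : Type*} [Field K] [Algebra ℚ K] {a : K}

lemma aeval_tribonacci (ha : a ^ 3 = a ^ 2 + a + 1) :
    aeval a (X ^ 3 - X ^ 2 - X - 1 : ℚ[X]) = 0 := by
  simp only [map_sub, map_pow, aeval_X, map_one]
  linear_combination ha

lemma isIntegral_of_tribonacci (ha : a ^ 3 = a ^ 2 + a + 1) : IsIntegral ℚ a :=
  ⟨X ^ 3 - X ^ 2 - X - 1, by monicity!, aeval_tribonacci ha⟩

lemma finrank_adjoin_of_tribonacci (ha : a ^ 3 = a ^ 2 + a + 1) : finrank ℚ ℚ⟮a⟯ = 3 := by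
  rw [adjoin.finrank (isIntegral_of_tribonacci ha),
    ← minpoly.eq_of_irreducible_of_monic irreducible_tribonacci (aeval_tribonacci ha)
      (by monicity!)]
  compute_degree!

end Cubic

/-- `X³ - X² - X - 1 = (X - α) (X - β) (X - γ)`, encoded by Vieta's formulas so that identities
between the three roots are polynomial consequences of the fields. -/
structure TribonacciRoots {R : Type*} [CommRing R] (α β γ : R) : Prop where
  sum_eq : α + β + γ = 1
  sum_mul_eq : α * β + β * γ + γ * α = -1
  prod_eq : α * β * γ = 1

namespace TribonacciRoots

section CommRing

variable {R : Type*} [CommRing R] {α β γ : R}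

lemma of_ne [IsDomain R] (hα : α ^ 3 = α ^ 2 + α + 1) (hβ : β ^ 3 = β ^ 2 + β + 1)
    (hne : α ≠ β) : TribonacciRoots α β (1 - α - β) := by
  have hq : α ^ 2 + α * β + β ^ 2 - α - β - 1 = 0 := by
    refine (mul_eq_zero.1 ?_).resolve_left (sub_ne_zero.2 hne)
    linear_combination hα - hβ
  exact ⟨by ring, by linear_combination -hq, by linear_combination hα - α * hq⟩

lemma cube_eq (h : TribonacciRoots α β γ) : γ ^ 3 = γ ^ 2 + γ + 1 := by
  linear_combination γ ^ 2 * h.sum_eq - γ * h.sum_mul_eq + h.prod_eq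

lemma sub_mul_sub (h : TribonacciRoots α β γ) : (β - γ) * (γ - α) = 1 + 2 * γ - 3 * γ ^ 2 := by
  linear_combination 2 * γ * h.sum_eq - h.sum_mul_eq

lemma sq_sub (h : TribonacciRoots α β γ) : (α - β) ^ 2 = 5 + 2 * γ - 3 * γ ^ 2 := by
  linear_combination (α + β + 1 + 3 * γ) * h.sum_eq - 4 * h.sum_mul_eq

lemma sq_prod_sub (h : TribonacciRoots α β γ) : ((α - β) * (β - γ) * (γ - α)) ^ 2 = -44 := by
  calc
    ((α - β) * (β - γ) * (γ - α)) ^ 2 = (α - β) ^ 2 * ((β - γ) * (γ - α)) ^ 2 := by ring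
    _ = (5 + 2 * γ - 3 * γ ^ 2) * (1 + 2 * γ - 3 * γ ^ 2) ^ 2 := by rw [h.sq_sub, h.sub_mul_sub]
    _ = -44 := by
      linear_combination (-27 * γ ^ 3 + 27 * γ ^ 2 + 27 * γ - 49) * h.cube_eq

lemma sq_sub_four_mul_sq (h : TribonacciRoots α β γ) :
    (γ ^ 2 - 4) * (γ ^ 2 + γ - 1) ^ 2 = -11 := by
  linear_combination (γ ^ 3 + 3 * γ ^ 2 - γ - 7) * h.cube_eq

lemma sq_add_sq (h : TribonacciRoots α β γ) : α ^ 2 + β ^ 2 = (3 * γ - γ ^ 3) * (α * β) := by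
  linear_combination (α + β + γ + 1) * h.sum_eq - 2 * h.sum_mul_eq - (3 - γ ^ 2) * h.prod_eq

lemma left_ne_zero [Nontrivial R] (h : TribonacciRoots α β γ) : α ≠ 0 :=
  left_ne_zero_of_mul (left_ne_zero_of_mul_eq_one h.prod_eq)

lemma middle_ne_zero [Nontrivial R] (h : TribonacciRoots α β γ) : β ≠ 0 :=
  right_ne_zero_of_mul (left_ne_zero_of_mul_eq_one h.prod_eq)

lemma right_mem {S : Type*} [SetLike S R] [SubringClass S R] {A : S}
    (h : TribonacciRoots α β γ) (hα : α ∈ A) (hβ : β ∈ A) : γ ∈ A := by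
  have hγ : γ = 1 - α - β := by linear_combination h.sum_eq
  rw [hγ]
  exact sub_mem (sub_mem (one_mem A) hα) hβ

end CommRing

variable {K : Type*} [Field K] [Algebra ℚ K] {α β γ x z : K}

lemma six_dvd_finrank {E : IntermediateField ℚ K} (h : TribonacciRoots α β γ) (hα : α ∈ E)
    (hβ : β ∈ E) : 6 ∣ finrank ℚ E := by
  have hγ : γ ∈ E := h.right_mem hα hβ
  have three_dvd : 3 ∣ finrank ℚ E := by
    rw [← finrank_adjoin_of_tribonacci h.cube_eq]
    exact finrank_dvd_of_le_right (adjoin_simple_le_iff.2 hγ)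
  have two_dvd : 2 ∣ finrank ℚ E := by
    rw [← even_iff_two_dvd, ← Nat.not_odd_iff_even]
    intro hodd
    have hdiscr : (α - β) * (β - γ) * (γ - α) ∈ E :=
      mul_mem (mul_mem (sub_mem hα hβ) (sub_mem hβ hγ)) (sub_mem hγ hα)
    have hsq : IsSquare (-44 : ℚ) :=
      isSquare_of_sq_eq_of_odd_finrank hodd hdiscr (by rw [h.sq_prod_sub, map_neg, map_ofNat])
    exact absurd hsq.nonneg (by norm_num)
  lia

lemma adjoin_le_adjoin_prod_sub (h : TribonacciRoots α β γ) :
    adjoin ℚ {α, β} ≤ (ℚ⟮γ⟯⟮(α - β) * (β - γ) * (γ - α)⟯).restrictScalars ℚ := by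
  have : CharZero K := algebraRat.charZero K
  set δ := (α - β) * (β - γ) * (γ - α)
  have mem_γ : γ ∈ ℚ⟮γ⟯⟮δ⟯ := IntermediateField.algebraMap_mem _ (AdjoinSimple.gen ℚ γ)
  have mem_δ : δ ∈ ℚ⟮γ⟯⟮δ⟯ := mem_adjoin_simple_self _ δ
  have hne : (β - γ) * (γ - α) ≠ 0 := by
    intro h0
    have hsq := h.sq_prod_sub
    rw [mul_assoc, h0] at hsq
    norm_num at hsq
  have mem_diff : α - β ∈ ℚ⟮γ⟯⟮δ⟯ := by
    have hdiff : α - β = δ / (1 + 2 * γ - 3 * γ ^ 2) := by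
      rw [← h.sub_mul_sub, eq_div_iff hne, ← mul_assoc]
    rw [hdiff]
    exact div_mem mem_δ (sub_mem (add_mem (one_mem _) (mul_mem (ofNat_mem _ 2) mem_γ))
      (mul_mem (ofNat_mem _ 3) (pow_mem mem_γ 2)))
  have mem_α : α ∈ ℚ⟮γ⟯⟮δ⟯ := by
    have hα : α = ((1 - γ) + (α - β)) / 2 := by linear_combination h.sum_eq / 2
    rw [hα]
    exact div_mem (add_mem (sub_mem (one_mem _) mem_γ) mem_diff) (ofNat_mem _ 2)
  have mem_β : β ∈ ℚ⟮γ⟯⟮δ⟯ := by simpa using sub_mem mem_α mem_diff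
  rw [adjoin_le_iff]
  rintro x (rfl | rfl)
  exacts [mem_α, mem_β]

lemma sq_ne_thirtyThree (h : TribonacciRoots α β γ) (hx : x ∈ adjoin ℚ {α, β}) :
    x ^ 2 ≠ 33 := by
  intro hx33
  have hodd : Odd (finrank ℚ ℚ⟮γ⟯) := by rw [finrank_adjoin_of_tribonacci h.cube_eq]; decide
  have isSquare_rat (q : ℚ) (hq : IsSquare (q : ℚ⟮γ⟯)) : IsSquare q := by
    obtain ⟨y, hy⟩ := hq
    refine isSquare_of_sq_eq_of_odd_finrank hodd y.2 ?_
    simpa [sq] using congrArg (algebraMap ℚ⟮γ⟯ K) hy.symm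
  have hsq := isSquare_or_isSquare_mul_of_mem_adjoin_sqrt (F := ℚ⟮γ⟯) (c := 33) (d := -44)
    (by rw [map_neg, map_ofNat, h.sq_prod_sub]) (h.adjoin_le_adjoin_prod_sub hx)
    (by rw [map_ofNat, hx33])
  rcases hsq with h33 | hneg
  · exact absurd (isSquare_rat 33 (by simpa using h33)) (by norm_num)
  · exact absurd (isSquare_rat (33 * -44) (by simpa using hneg)).nonneg (by norm_num)

lemma sq_add_mul_add_one_eq_zero (h : TribonacciRoots α β γ) (hz : z ∈ adjoin ℚ {α, β})
    (hz3 : z ^ 3 = α / β) : z ^ 2 + γ * z + 1 = 0 := by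
  have hα : α ≠ 0 := h.left_ne_zero
  have hβ : β ≠ 0 := h.middle_ne_zero
  have hz0 : z ≠ 0 := by
    rintro rfl
    simp [hα, hβ, eq_comm] at hz3
  have hsextic : z ^ 6 + (γ ^ 3 - 3 * γ) * z ^ 3 + 1 = 0 := by
    rw [show z ^ 6 = (z ^ 3) ^ 2 by ring, hz3]
    field_simp
    linear_combination h.sq_add_sq
  have hfactor : (z ^ 2 + γ * z + 1) *
      (z ^ 4 - γ * z ^ 3 + (γ ^ 2 - 1) * z ^ 2 - γ * z + 1) = 0 := by
    linear_combination hsextic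
  refine (mul_eq_zero.1 hfactor).resolve_right fun hquartic ↦ ?_
  have hsq : (2 * (z + z⁻¹) - γ) ^ 2 = -3 * (γ ^ 2 - 4) := by
    field_simp
    linear_combination 4 * hquartic
  refine h.sq_ne_thirtyThree (x := (2 * (z + z⁻¹) - γ) * (γ ^ 2 + γ - 1)) ?_ ?_
  · have mem_α : α ∈ adjoin ℚ {α, β} := subset_adjoin ℚ _ (by simp)
    have mem_β : β ∈ adjoin ℚ {α, β} := subset_adjoin ℚ _ (by simp)
    have mem_γ : γ ∈ adjoin ℚ {α, β} := h.right_mem mem_α mem_β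
    exact mul_mem (sub_mem (mul_mem (ofNat_mem _ 2) (add_mem hz (inv_mem hz))) mem_γ)
      (sub_mem (add_mem (pow_mem mem_γ 2) mem_γ) (one_mem _))
  · rw [mul_pow, hsq, mul_assoc, h.sq_sub_four_mul_sq]
    norm_num

lemma six_dvd_finrank_adjoin (h : TribonacciRoots α β γ) (hz : z ^ 2 + γ * z + 1 = 0)
    (hz3 : z ^ 3 = α / β) : 6 ∣ finrank ℚ ℚ⟮z⟯ := by
  have : CharZero K := algebraRat.charZero K
  have hz0 : z ≠ 0 := by rintro rfl; simp at hz
  have hα : α = z ^ 3 * β := by rw [hz3, div_mul_cancel₀ _ h.middle_ne_zero]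
  have hβ : β * (1 + z ^ 3) = 1 - γ := by linear_combination h.sum_eq - hα
  have hγ : γ = -(z + z⁻¹) := by
    field_simp
    linear_combination hz
  have hγ1 : 1 - γ ≠ 0 := by
    intro h0
    have h2 : (2 : K) = 0 := by linear_combination (1 - γ ^ 2) * h0 - h.cube_eq
    norm_num at h2
  have mem_z : z ∈ ℚ⟮z⟯ := mem_adjoin_simple_self ℚ z
  have mem_γ : γ ∈ ℚ⟮z⟯ := hγ ▸ neg_mem (add_mem mem_z (inv_mem mem_z))
  have mem_β : β ∈ ℚ⟮z⟯ := by
    rw [eq_div_of_mul_eq (right_ne_zero_of_mul (hβ ▸ hγ1)) hβ]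
    exact div_mem (sub_mem (one_mem _) mem_γ) (add_mem (one_mem _) (pow_mem mem_z 3))
  exact h.six_dvd_finrank (hα ▸ mul_mem (pow_mem mem_z 3) mem_β) mem_β

end TribonacciRoots

section Sextic

variable {K : Type*} [Field K] [Algebra ℚ K] {z : K}

lemma sextic_eq_zero {R : Type*} [CommRing R] {c x : R} (hc : c ^ 3 = c ^ 2 + c + 1)
    (hx : x ^ 2 + c * x + 1 = 0) :
    x ^ 6 + x ^ 5 + 2 * x ^ 4 + 3 * x ^ 3 + 2 * x ^ 2 + x + 1 = 0 := by
  linear_combination (x ^ 4 + (1 - c) * x ^ 3 + (1 - c + c ^ 2) * x ^ 2 + (1 - c) * x + 1) * hx -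
    x ^ 3 * hc

lemma minpoly_eq_sextic (hroot : z ^ 6 + z ^ 5 + 2 * z ^ 4 + 3 * z ^ 3 + 2 * z ^ 2 + z + 1 = 0)
    (hdvd : 6 ∣ finrank ℚ ℚ⟮z⟯) :
    minpoly ℚ z = X ^ 6 + X ^ 5 + C 2 * X ^ 4 + C 3 * X ^ 3 + C 2 * X ^ 2 + X + 1 := by
  set Q : ℚ[X] := X ^ 6 + X ^ 5 + C 2 * X ^ 4 + C 3 * X ^ 3 + C 2 * X ^ 2 + X + 1 with hQ
  have hmonic : Q.Monic := by rw [hQ]; monicity!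
  have hdeg : Q.natDegree = 6 := by rw [hQ]; compute_degree!
  have haeval : aeval z Q = 0 := by simpa [hQ] using hroot
  have hint : IsIntegral ℚ z := ⟨Q, hmonic, haeval⟩
  rw [adjoin.finrank hint] at hdvd
  have hle : 6 ≤ (minpoly ℚ z).natDegree := Nat.le_of_dvd (minpoly.natDegree_pos hint) hdvd
  exact (eq_of_monic_of_dvd_of_natDegree_le (minpoly.monic hint) hmonic
    (minpoly.dvd ℚ z haeval) (hdeg.trans_le hle)).symm

end Sextic

theorem minpoly_cube_root_alpha_div_beta_general {K : Type*} [Field K] [Algebra ℚ K] {α β z : K}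
    (hα : α ^ 3 = α ^ 2 + α + 1) (hβ : β ^ 3 = β ^ 2 + β + 1) (hne : α ≠ β)
    (hzmem : z ∈ adjoin ℚ {α, β}) (hz : z ^ 3 = α / β) :
    z ^ 6 + z ^ 5 + 2 * z ^ 4 + 3 * z ^ 3 + 2 * z ^ 2 + z + 1 = 0 ∧
      Irreducible (X ^ 6 + X ^ 5 + C 2 * X ^ 4 + C 3 * X ^ 3 + C 2 * X ^ 2 + X + 1 : ℚ[X]) ∧
      minpoly ℚ z =
        X ^ 6 + X ^ 5 + C 2 * X ^ 4 + C 3 * X ^ 3 + C 2 * X ^ 2 + X + 1 := by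
  have hroots := TribonacciRoots.of_ne hα hβ hne
  have hquad := hroots.sq_add_mul_add_one_eq_zero hzmem hz
  have hroot := sextic_eq_zero hroots.cube_eq hquad
  have hmin := minpoly_eq_sextic hroot (hroots.six_dvd_finrank_adjoin hquad hz)
  have hint : IsIntegral ℚ z := minpoly.ne_zero_iff.1 <| by
    rw [hmin]; exact Monic.ne_zero (by monicity!)
  exact ⟨hroot, hmin ▸ minpoly.irreducible hint, hmin⟩

open Polynomial in
theorem minpoly_cube_root_alpha_div_beta (α β z : ℂ)
    (hαim : α.im = 0) (hα : α ^ 3 = α ^ 2 + α + 1)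
    (hα1 : 1.83 < α.re) (hα2 : α.re < 1.84)
    (hβ : β ^ 3 = β ^ 2 + β + 1) (hβim : β.im ≠ 0)
    (hzmem : z ∈ IntermediateField.adjoin ℚ ({α, β} : Set ℂ))
    (hz : z ^ 3 = α / β) :
    z ^ 6 + z ^ 5 + 2 * z ^ 4 + 3 * z ^ 3 + 2 * z ^ 2 + z + 1 = 0 ∧
      Irreducible (X ^ 6 + X ^ 5 + C 2 * X ^ 4 + C 3 * X ^ 3 + C 2 * X ^ 2 + X + 1 : ℚ[X]) ∧
      minpoly ℚ z =
        X ^ 6 + X ^ 5 + C 2 * X ^ 4 + C 3 * X ^ 3 + C 2 * X ^ 2 + X + 1 :=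
  minpoly_cube_root_alpha_div_beta_general hα hβ (by rintro rfl; exact hβim hαim) hzmem hz
end

section
/- Suppose the nonnegative integers (n, n₁, x, x₁, y, y₁) satisfy T_n − 2^x·3^y = T_{n₁} − 2^{x₁}·3^{y₁}, with n > 310 and n > n₁. Then, setting X := x·log 2 + y·log 3, one has 0.08·α^n < 2^x·3^y < α^n·(n·log α)^{60·log(n·log α)}, and consequently n·log α − 3 < X < n·log α + 60·(log(n·log α))². -/
/-!
Put `u = 2 ^ x * 3 ^ y` and `v = 2 ^ x₁ * 3 ^ y₁`, so that `u - v = T n - T n₁`. The lower bounds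
hold because `u > T n - T n₁ ≥ T (n - 2) ≥ α ^ (n - 4)`.

For the upper bounds, let `X = log u`, `N = n log α` and `L = log N`, and suppose that
`X ≥ N + 60 L ^ 2`. Since `0 < u - v ≤ α ^ n`, the number `Λ = log (u / v)`, an integral linear form
in `log 2` and `log 3`, satisfies `0 < Λ ≤ 2 exp (N - X)`. This contradicts the lower bound
`Λ ≥ exp (-62 log (6 X) - 31)`, which comes from explicit approximations of Padé type.

Write `Λ = h log (9/8) + l log (4/3)` with integers `h`, `l`. Integrating
`(t - 8)^(2k) (t - 9)^(4k) (t - 12)^(6k) / t^(6k+1)` over `[8, 9]` and over `[9, 12]` gives linear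
forms `c log (9/8) - p` and `c log (4/3) - r` with the same integer `c` and rational `p`, `r`. The
endpoints and exponents are such that no power of `2` or `3` remains in the denominators of the
individual terms, so `D = lcm (1, ..., 6k)` is a common denominator. Comparing `D` with the
multinomial coefficient `(6k)! / ((3k)! (2k)! k!)` yields `D ≤ 1728 ^ k`, whereas the integrals are
at most `0.018 ^ (2k)`; hence `D c Λ` is an integer plus an error that tends to zero like
`0.56 ^ k`. If the integer is nonzero, `|Λ| ≥ 1 / (2 D |c|)`. If it is zero, the integral over
`[9, 12]`, which is exponentially larger than the one over `[8, 9]`, bounds `|c Λ|` from below, so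
that no determinant of two consecutive approximations is needed.
-/

theorem mul_pow_le_mul_pow_of_le {R : Type*} [CommSemiring R] [PartialOrder R] [IsOrderedRing R]
    {c d x y : R} {m k : ℕ} (hx : 0 ≤ x) (hxy : x ≤ y) (hd : 0 ≤ d)
    (h : c * x ^ m ≤ d * y ^ m) (hmk : m ≤ k) : c * x ^ k ≤ d * y ^ k := by
  obtain ⟨j, rfl⟩ := Nat.exists_eq_add_of_le hmk
  have hy : 0 ≤ y := hx.trans hxy
  calc c * x ^ (m + j) = c * x ^ m * x ^ j := by ring
    _ ≤ d * y ^ m * y ^ j := by gcongr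
    _ = d * y ^ (m + j) := by ring

/-! ### The least common multiple of the first integers -/

section LcmUpto

open Nat

theorem factorization_lcmUpto_eq_sum {p n b : ℕ} (hp : p.Prime) (hb : p.log n < b) :
    (lcmUpto n).factorization p = ∑ i ∈ Finset.Ico 1 b, if p ^ i ≤ n then 1 else 0 := by
  have hfilter : {i ∈ Finset.Ico 1 b | p ^ i ≤ n} = Finset.Ico 1 (p.log n + 1) := by
    ext i
    simp only [Finset.mem_filter, Finset.mem_Ico]
    constructor
    · rintro ⟨⟨hi, -⟩, hle⟩
      exact ⟨hi, Nat.lt_succ_of_le (Nat.le_log_of_pow_le hp.one_lt hle)⟩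
    · rintro ⟨hi, hlt⟩
      have hn : n ≠ 0 := by rintro rfl; simp at hlt; lia
      exact ⟨⟨hi, by lia⟩, Nat.pow_le_of_le_log hn (by lia)⟩
  rw [factorization_lcmUpto _ hp, Finset.sum_boole, hfilter]
  simp

theorem ite_add_div_add_div_add_div_le (k : ℕ) {q : ℕ} (hq : 0 < q) :
    (if q ≤ 6 * k then 1 else 0) + (3 * k / q + 2 * k / q + k / q) ≤
      6 * k / q + if q ≤ k then 1 else 0 := by
  have h₃ : 2 * (3 * k / q) ≤ 6 * k / q := by
    rw [Nat.le_div_iff_mul_le hq]; linarith [Nat.div_mul_le_self (3 * k) q]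
  have h₂ : 3 * (2 * k / q) ≤ 6 * k / q := by
    rw [Nat.le_div_iff_mul_le hq]; linarith [Nat.div_mul_le_self (2 * k) q]
  have h₁ : 6 * (k / q) ≤ 6 * k / q := by
    rw [Nat.le_div_iff_mul_le hq]; linarith [Nat.div_mul_le_self k q]
  have h₆ : q ≤ 6 * k → 1 ≤ 6 * k / q := (Nat.one_le_div_iff hq).2
  -- If `q > k`, then `k / q = 0`, and `6k / q ≥ 1` forces it to exceed `3k / q + 2k / q` because
  -- `1/2 + 1/3 < 1`.
  have h₀ : ¬ q ≤ k → k / q = 0 := fun h => Nat.div_eq_of_lt (not_le.1 h)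
  split_ifs <;> lia

theorem lcmUpto_six_mul_mul_factorials_dvd (k : ℕ) :
    lcmUpto (6 * k) * ((3 * k)! * (2 * k)! * k !) ∣ (6 * k)! * lcmUpto k := by
  have hf := Nat.factorial_ne_zero
  have hl := lcmUpto_ne_zero
  rw [← Nat.factorization_prime_le_iff_dvd (by simp [hf, hl]) (by simp [hf, hl])]
  intro p hp
  have hlog : ∀ m ≤ 6 * k, p.log m < p.log (6 * k) + 1 := fun m hm =>
    Nat.lt_succ_of_le (Nat.log_mono_right hm)
  rw [Nat.factorization_mul (hl _) (by simp [hf]), Nat.factorization_mul (by simp [hf]) (hf _),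
    Nat.factorization_mul (hf _) (hf _), Nat.factorization_mul (hf _) (hl _)]
  simp only [Finsupp.add_apply]
  rw [factorization_lcmUpto_eq_sum hp (hlog (6 * k) le_rfl),
    factorization_lcmUpto_eq_sum hp (hlog k (by lia)),
    factorization_factorial hp (hlog (3 * k) (by lia)),
    factorization_factorial hp (hlog (2 * k) (by lia)),
    factorization_factorial hp (hlog k (by lia)),
    factorization_factorial hp (hlog (6 * k) le_rfl)]
  simp only [← Finset.sum_add_distrib]
  exact Finset.sum_le_sum fun i _ => ite_add_div_add_div_add_div_le k (pow_pos hp.pos i)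

theorem factorial_six_mul_le (k : ℕ) :
    (6 * k)! ≤ 432 ^ k * ((3 * k)! * (2 * k)! * k !) := by
  induction k with
  | zero => simp
  | succ k ih =>
    have h : (6 * k + 1) * (6 * k + 5) ≤ 36 * (k + 1) ^ 2 := by nlinarith
    calc (6 * (k + 1))! = 24 * ((3 * k + 1) * (3 * k + 2) * (3 * k + 3) * (2 * k + 1)) *
          ((6 * k + 1) * (6 * k + 5)) * (6 * k)! := by
            simp only [show 6 * (k + 1) = 6 * k + 5 + 1 by ring, Nat.factorial_succ]; ring
      _ ≤ 24 * ((3 * k + 1) * (3 * k + 2) * (3 * k + 3) * (2 * k + 1)) *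
          (36 * (k + 1) ^ 2) * (432 ^ k * ((3 * k)! * (2 * k)! * k !)) := by gcongr
      _ = 432 ^ (k + 1) * ((3 * (k + 1))! * (2 * (k + 1))! * (k + 1)!) := by
            simp only [show 3 * (k + 1) = 3 * k + 2 + 1 by ring,
              show 2 * (k + 1) = 2 * k + 1 + 1 by ring, Nat.factorial_succ]
            ring

theorem lcmUpto_six_mul_le (k : ℕ) : lcmUpto (6 * k) ≤ 432 ^ k * lcmUpto k := by
  have hpos : 0 < (3 * k)! * (2 * k)! * k ! := by positivity
  refine Nat.le_of_mul_le_mul_right ?_ hpos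
  calc lcmUpto (6 * k) * ((3 * k)! * (2 * k)! * k !)
      ≤ (6 * k)! * lcmUpto k :=
        Nat.le_of_dvd (Nat.mul_pos (factorial_pos _) (lcmUpto_pos _))
          (lcmUpto_six_mul_mul_factorials_dvd k)
    _ ≤ 432 ^ k * ((3 * k)! * (2 * k)! * k !) * lcmUpto k :=
        Nat.mul_le_mul_right _ (factorial_six_mul_le k)
    _ = 432 ^ k * lcmUpto k * ((3 * k)! * (2 * k)! * k !) := by ring

theorem lcmUpto_mono : Monotone lcmUpto := fun _ n h =>
  Nat.le_of_dvd (lcmUpto_pos n) (Finset.lcm_mono (Finset.Icc_subset_Icc_right h))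

-- Rounding `n` up to a multiple `6k` costs a factor `4 ^ 5 = 1024`, which
-- `(4 ^ 6 / (432 * 4)) ^ k` absorbs as soon as `k ≥ 9`.
theorem lcmUpto_le_four_pow (n : ℕ) : lcmUpto n ≤ 4 ^ n := by
  induction n using Nat.strong_induction_on with
  | _ n ih =>
    rcases lt_or_ge n 49 with hn | hn
    · have hsmall : ∀ n < 49, lcmUpto n ≤ 4 ^ n := by decide +kernel
      exact hsmall n hn
    · obtain ⟨k, hnk, hkn⟩ : ∃ k, n ≤ 6 * k ∧ 6 * k ≤ n + 5 := ⟨(n + 5) / 6, by lia, by lia⟩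
      suffices h : 4 ^ 5 * lcmUpto n ≤ 4 ^ 5 * 4 ^ n from
        Nat.le_of_mul_le_mul_left h (by norm_num)
      calc 4 ^ 5 * lcmUpto n ≤ 4 ^ 5 * (432 ^ k * lcmUpto k) := by
            gcongr; exact (lcmUpto_mono hnk).trans (lcmUpto_six_mul_le k)
        _ ≤ 4 ^ 5 * (432 ^ k * 4 ^ k) := by gcongr; exact ih k (by lia)
        _ = 4 ^ 5 * 1728 ^ k := by rw [← mul_pow]; norm_num
        _ ≤ 1 * (4 ^ 6) ^ k :=
            mul_pow_le_mul_pow_of_le (m := 9) (by norm_num) (by norm_num) (by norm_num)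
              (by norm_num) (by lia)
        _ = 4 ^ (6 * k) := by rw [one_mul, pow_mul]
        _ ≤ 4 ^ (5 + n) := Nat.pow_le_pow_right (by norm_num) (by lia)
        _ = 4 ^ 5 * 4 ^ n := pow_add _ _ _

theorem lcmUpto_six_mul_le_pow (k : ℕ) : lcmUpto (6 * k) ≤ 1728 ^ k :=
  calc lcmUpto (6 * k) ≤ 432 ^ k * lcmUpto k := lcmUpto_six_mul_le k
    _ ≤ 432 ^ k * 4 ^ k := by gcongr; exact lcmUpto_le_four_pow k
    _ = 1728 ^ k := by rw [← mul_pow]; norm_num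

end LcmUpto

/-! ### Linear forms in logarithms from integrals of rational functions -/

section LinearForm

open Polynomial

theorem natCast_lcmUpto_dvd {d : ℤ} {n : ℕ} (h0 : d ≠ 0) (h : |d| ≤ n) :
    d ∣ (Nat.lcmUpto n : ℤ) := by
  rw [← Int.natAbs_dvd_natAbs, Int.natAbs_natCast]
  refine Finset.dvd_lcm (f := id) (Finset.mem_Icc.2 ⟨Int.natAbs_pos.2 h0, ?_⟩)
  exact_mod_cast (Int.natCast_natAbs d).le.trans h

theorem exists_int_eq_mul_zpow_div {a c D : ℤ} {i m : ℕ} (ha : a ≠ 0) (him : (i : ℤ) - m ≠ 0)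
    (h : a ^ m ∣ c * a ^ i) (hD : (i : ℤ) - m ∣ D) :
    ∃ p : ℤ, (D : ℝ) * (c * ((a : ℝ) ^ ((i : ℤ) - m) / ((i : ℤ) - m : ℤ))) = p := by
  obtain ⟨e, he⟩ := h
  obtain ⟨f, rfl⟩ := hD
  have ha' : (a : ℝ) ≠ 0 := by exact_mod_cast ha
  have him' : (((i : ℤ) - m : ℤ) : ℝ) ≠ 0 := by exact_mod_cast him
  have hce : (c : ℝ) * (a : ℝ) ^ ((i : ℤ) - m) = e := by
    rw [zpow_sub₀ ha', zpow_natCast, zpow_natCast, ← mul_div_assoc,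
      div_eq_iff (pow_ne_zero _ ha'), mul_comm (e : ℝ)]
    exact_mod_cast he
  refine ⟨f * e, ?_⟩
  rw [← mul_div_assoc, hce]
  push_cast at him' ⊢
  field_simp

theorem exists_int_eq_lcmUpto_mul_integral_zpow {a b c : ℤ} {i m : ℕ} (ha : 0 < a) (hab : a ≤ b)
    (him : i ≠ m) (hi : i ≤ 2 * m) (hda : a ^ m ∣ c * a ^ i) (hdb : b ^ m ∣ c * b ^ i) :
    ∃ p : ℤ, (Nat.lcmUpto m : ℝ) * (c * ∫ t in (a : ℝ)..b, t ^ ((i : ℤ) - m - 1)) = p := by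
  have h0 : (0 : ℝ) ∉ Set.uIcc (a : ℝ) b :=
    Set.notMem_uIcc_of_lt (by exact_mod_cast ha) (by exact_mod_cast ha.trans_le hab)
  have hd0 : (i : ℤ) - m ≠ 0 := by lia
  have hD : (i : ℤ) - m ∣ (Nat.lcmUpto m : ℤ) :=
    natCast_lcmUpto_dvd hd0 (by rw [abs_le]; lia)
  obtain ⟨p, hp⟩ := exists_int_eq_mul_zpow_div (ha.trans_le hab).ne' hd0 hdb hD
  obtain ⟨q, hq⟩ := exists_int_eq_mul_zpow_div ha.ne' hd0 hda hD
  refine ⟨p - q, ?_⟩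
  rw [integral_zpow (Or.inr ⟨by lia, h0⟩)]
  push_cast at hp hq ⊢
  rw [← hp, ← hq, sub_add_cancel, sub_add_cancel]
  ring

theorem integral_aeval_div_pow_eq_sum {P : ℤ[X]} {N : ℕ} (hP : P.natDegree < N) (m : ℕ) {a b : ℝ}
    (h0 : (0 : ℝ) ∉ Set.uIcc a b) :
    ∫ t in a..b, aeval t P / t ^ (m + 1) =
      ∑ i ∈ Finset.range N, (P.coeff i : ℝ) * ∫ t in a..b, t ^ ((i : ℤ) - m - 1) := by
  simp_rw [← intervalIntegral.integral_const_mul]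
  rw [← intervalIntegral.integral_finsetSum fun i _ =>
    (intervalIntegral.intervalIntegrable_zpow (Or.inr h0)).const_mul _]
  refine intervalIntegral.integral_congr fun t ht => ?_
  have ht0 : t ≠ 0 := fun h => h0 (h ▸ ht)
  simp only [aeval_def, eval₂_eq_sum_range' _ hP, Finset.sum_div]
  refine Finset.sum_congr rfl fun i _ => ?_
  rw [show (i : ℤ) - m - 1 = (i : ℤ) - ((m + 1 : ℕ) : ℤ) by push_cast; ring,
    zpow_sub₀ ht0, zpow_natCast, zpow_natCast]
  simp [mul_div_assoc]

-- The term of index `m` of `P` produces the logarithm; every other one gives a number of the form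
-- `P_i (b ^ (i - m) - a ^ (i - m)) / (i - m)`.
theorem exists_lcmUpto_mul_integral_eq {P : ℤ[X]} {m : ℕ} (hP : P.natDegree ≤ 2 * m) {a b : ℤ}
    (ha : 0 < a) (hab : a ≤ b)
    (hda : C (a ^ m) ∣ P.comp (C a * X)) (hdb : C (b ^ m) ∣ P.comp (C b * X)) :
    ∃ p : ℤ, (Nat.lcmUpto m : ℝ) * ∫ t in (a : ℝ)..b, aeval t P / t ^ (m + 1) =
      Nat.lcmUpto m * P.coeff m * Real.log (b / a) - p := by
  simp only [C_dvd_iff_dvd_coeff, comp_C_mul_X_coeff] at hda hdb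
  have h0 : (0 : ℝ) ∉ Set.uIcc (a : ℝ) b :=
    Set.notMem_uIcc_of_lt (by exact_mod_cast ha) (by exact_mod_cast ha.trans_le hab)
  have hlog : ∫ t in (a : ℝ)..b, t ^ ((m : ℤ) - m - 1) = Real.log (b / a) := by
    simp [← integral_inv h0]
  have hterm : ∀ i ∈ (Finset.range (2 * m + 1)).erase m, ∃ p : ℤ, (Nat.lcmUpto m : ℝ) *
      (P.coeff i * ∫ t in (a : ℝ)..b, t ^ ((i : ℤ) - m - 1)) = p := by
    intro i hi
    rw [Finset.mem_erase, Finset.mem_range] at hi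
    exact exists_int_eq_lcmUpto_mul_integral_zpow ha hab hi.1 (by lia) (hda i) (hdb i)
  choose! p hp using hterm
  refine ⟨-∑ i ∈ (Finset.range (2 * m + 1)).erase m, p i, ?_⟩
  rw [integral_aeval_div_pow_eq_sum (Nat.lt_succ_of_le hP) m h0, Finset.mul_sum,
    ← Finset.add_sum_erase _ _ (Finset.mem_range.2 (by lia : m < 2 * m + 1)),
    Finset.sum_congr rfl hp, hlog]
  push_cast
  ring

end LinearForm

/-! ### The approximating polynomials -/

section Pade

open Polynomial

/-- The numerator of the rational functions `padeNum k / t ^ (6k + 1)` whose integrals between two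
of the points `8`, `9`, `12` are small linear forms in `1` and the logarithm of the quotient of
these points. -/
noncomputable def padeNum (k : ℕ) : ℤ[X] :=
  (X - C 8) ^ (2 * k) * (X - C 9) ^ (4 * k) * (X - C 12) ^ (6 * k)

theorem natDegree_padeNum_le (k : ℕ) : (padeNum k).natDegree ≤ 2 * (6 * k) := by
  unfold padeNum
  compute_degree
  lia

theorem C_gcd_dvd_X_sub_C_comp (a b : ℤ) : C (a.gcd b : ℤ) ∣ (X - C b).comp (C a * X) := by
  rw [sub_comp, X_comp, C_comp]
  exact dvd_sub ((map_dvd C (Int.gcd_dvd_left ..)).mul_right X) (map_dvd C (Int.gcd_dvd_right ..))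

theorem C_pow_dvd_padeNum_comp (k : ℕ) {a : ℤ}
    (ha : a ^ 6 ∣ (a.gcd 8 : ℤ) ^ 2 * (a.gcd 9 : ℤ) ^ 4 * (a.gcd 12 : ℤ) ^ 6) :
    C (a ^ (6 * k)) ∣ (padeNum k).comp (C a * X) := by
  have hdvd : C (((a.gcd 8 : ℤ) ^ 2 * (a.gcd 9 : ℤ) ^ 4 * (a.gcd 12 : ℤ) ^ 6) ^ k) ∣
      (padeNum k).comp (C a * X) := by
    simp only [padeNum, mul_comp, pow_comp, mul_pow, ← pow_mul, C_mul, C_pow]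
    gcongr <;> exact C_gcd_dvd_X_sub_C_comp _ _
  rw [pow_mul]
  exact (map_dvd C (pow_dvd_pow_of_dvd ha k)).trans hdvd

theorem padeNum_comp_neg_one_mul_X (k : ℕ) : (padeNum k).comp (C (-1) * X) =
    ((X + C 8) ^ (2 * k) * (X + C 9) ^ (4 * k) * (X + C 12) ^ (6 * k) : ℕ[X]).map
      (Nat.castRingHom ℤ) := by
  have hneg (b : ℤ) (j : ℕ) : (C (-1) * X - C b) ^ (2 * j) = (X + C b) ^ (2 * j) := by
    rw [C_neg, C_1, neg_one_mul, ← neg_add', (even_two_mul j).neg_pow]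
  simp only [padeNum, mul_comp, pow_comp, sub_comp, X_comp, C_comp, Polynomial.map_mul,
    Polynomial.map_pow, Polynomial.map_add, map_X, map_C, hneg,
    show 4 * k = 2 * (2 * k) by ring, show 6 * k = 2 * (3 * k) by ring]
  rfl

theorem coeff_mul_pow_le_eval (S : ℕ[X]) (i r : ℕ) : S.coeff i * r ^ i ≤ S.eval r := by
  rw [eval_eq_sum]
  by_cases hi : S.coeff i = 0
  · simp [hi]
  · exact Finset.single_le_sum (f := fun i => S.coeff i * r ^ i) (fun _ _ => Nat.zero_le _)
      (mem_support_iff.2 hi)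

-- The point `10` nearly minimises `(r + 8) ^ 2 * (r + 9) ^ 4 * (r + 12) ^ 6 / r ^ 6`.
theorem abs_coeff_padeNum_le (k : ℕ) : |(padeNum k).coeff (6 * k)| ≤ 4800000000 ^ k := by
  have hcoeff := congrArg (fun R => R.coeff (6 * k)) (padeNum_comp_neg_one_mul_X k)
  set S : ℕ[X] := (X + C 8) ^ (2 * k) * (X + C 9) ^ (4 * k) * (X + C 12) ^ (6 * k) with hS
  simp only [comp_C_mul_X_coeff, coeff_map] at hcoeff
  rw [Even.neg_one_pow ⟨3 * k, by ring⟩, mul_one] at hcoeff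
  have heval : S.eval 10 ≤ 4800000000 ^ k * 10 ^ (6 * k) := by
    simp only [hS, eval_mul, eval_pow, eval_add, eval_X, eval_C]
    simp only [pow_mul, ← mul_pow]
    exact Nat.pow_le_pow_left (by norm_num) k
  have hle : S.coeff (6 * k) ≤ 4800000000 ^ k :=
    Nat.le_of_mul_le_mul_right ((coeff_mul_pow_le_eval S (6 * k) 10).trans heval) (by positivity)
  rw [hcoeff, eq_natCast, Nat.abs_cast]
  exact_mod_cast hle

end Pade

/-! ### Size of the integrals -/

section Integrals

open Polynomial

/-- The rational function whose `k`-th power, divided by `t`, is `padeNum k / t ^ (6k + 1)`. -/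
noncomputable def padeFun (t : ℝ) : ℝ := ((t - 8) * (t - 9) ^ 2 * (12 - t) ^ 3 / t ^ 3) ^ 2

/-- The integral of `padeNum k / t ^ (6k + 1)` over `[a, b]`, the remainder of the rational
approximation to `log (b / a)` when `a` and `b` are among `8`, `9`, `12`. -/
noncomputable def padeIntegral (k : ℕ) (a b : ℝ) : ℝ := ∫ t in a..b, padeFun t ^ k / t

theorem padeFun_nonneg (t : ℝ) : 0 ≤ padeFun t := sq_nonneg _

theorem aeval_padeNum_div (k : ℕ) (t : ℝ) :
    aeval t (padeNum k) / t ^ (6 * k + 1) = padeFun t ^ k / t := by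
  have haeval : aeval t (padeNum k) =
      (t - 8) ^ (2 * k) * (t - 9) ^ (4 * k) * (12 - t) ^ (6 * k) := by
    have heven : (12 - t) ^ (6 * k) = (t - 12) ^ (6 * k) := by
      rw [← neg_sub, Even.neg_pow ⟨3 * k, by ring⟩]
    rw [heven]
    simp only [padeNum, map_mul, map_pow, map_sub, aeval_X, aeval_C]
    simp
  rw [haeval, padeFun, pow_succ, ← div_div]
  congr 1
  simp only [pow_mul, ← mul_pow, ← div_pow]
  ring

theorem exists_lcmUpto_mul_padeIntegral_eq (k : ℕ) {a b : ℤ} (ha : 0 < a) (hab : a ≤ b)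
    (hda : a ^ 6 ∣ (a.gcd 8 : ℤ) ^ 2 * (a.gcd 9 : ℤ) ^ 4 * (a.gcd 12 : ℤ) ^ 6)
    (hdb : b ^ 6 ∣ (b.gcd 8 : ℤ) ^ 2 * (b.gcd 9 : ℤ) ^ 4 * (b.gcd 12 : ℤ) ^ 6) :
    ∃ p : ℤ, Nat.lcmUpto (6 * k) * padeIntegral k a b =
      Nat.lcmUpto (6 * k) * (padeNum k).coeff (6 * k) * Real.log (b / a) - p := by
  simp only [padeIntegral, ← aeval_padeNum_div]
  exact exists_lcmUpto_mul_integral_eq (natDegree_padeNum_le k) ha hab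
    (C_pow_dvd_padeNum_comp k hda) (C_pow_dvd_padeNum_comp k hdb)

theorem sub_pow_mul_sub_pow_nonneg {t p q : ℝ} (hp : p ≤ t) (hq : t ≤ q) (i j : ℕ) :
    0 ≤ (t - p) ^ i * (q - t) ^ j :=
  mul_nonneg (pow_nonneg (sub_nonneg.2 hp) _) (pow_nonneg (sub_nonneg.2 hq) _)

-- On each of the chosen subintervals, the difference of the two sides has nonnegative Bernstein
-- coefficients of degree `6`, here and in the next lemma.
theorem mul_le_mul_cube_of_mem_Icc_eight_nine {t : ℝ} (ht : t ∈ Set.Icc 8 9) :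
    (t - 8) * (t - 9) ^ 2 * (12 - t) ^ 3 ≤ 0.0136 * t ^ 3 := by
  obtain ⟨h8, h9⟩ := ht
  rcases le_total t 8.25 with h | h
  · have B := sub_pow_mul_sub_pow_nonneg h8 h
    linarith [B 6 0, B 5 1, B 4 2, B 3 3, B 2 4, B 1 5, B 0 6]
  rcases le_total t 8.5 with h' | h'
  · have B := sub_pow_mul_sub_pow_nonneg h h'
    linarith [B 6 0, B 5 1, B 4 2, B 3 3, B 2 4, B 1 5, B 0 6]
  · have B := sub_pow_mul_sub_pow_nonneg h' h9
    linarith [B 6 0, B 5 1, B 4 2, B 3 3, B 2 4, B 1 5, B 0 6]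

theorem mul_le_mul_cube_of_mem_Icc_nine_twelve {t : ℝ} (ht : t ∈ Set.Icc 9 12) :
    (t - 8) * (t - 9) ^ 2 * (12 - t) ^ 3 ≤ 0.018 * t ^ 3 := by
  obtain ⟨h9, h12⟩ := ht
  rcases le_total t 10 with h | h
  · have B := sub_pow_mul_sub_pow_nonneg h9 h
    linarith [B 6 0, B 5 1, B 4 2, B 3 3, B 2 4, B 1 5, B 0 6]
  rcases le_total t 10.5 with h' | h'
  · have B := sub_pow_mul_sub_pow_nonneg h h'
    linarith [B 6 0, B 5 1, B 4 2, B 3 3, B 2 4, B 1 5, B 0 6]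
  · have B := sub_pow_mul_sub_pow_nonneg h' h12
    linarith [B 6 0, B 5 1, B 4 2, B 3 3, B 2 4, B 1 5, B 0 6]

theorem padeFun_le_sq {t c : ℝ} (ht : t ∈ Set.Icc 8 12)
    (h : (t - 8) * (t - 9) ^ 2 * (12 - t) ^ 3 ≤ c * t ^ 3) : padeFun t ≤ c ^ 2 := by
  have h8 : 0 ≤ t - 8 := sub_nonneg.2 ht.1
  have h12 : 0 ≤ 12 - t := sub_nonneg.2 ht.2
  have h0 : 0 < t := by linarith
  exact pow_le_pow_left₀ (by positivity) ((div_le_iff₀ (by positivity)).2 h) 2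

-- The maximum of `padeFun` on `[9, 12]` lies close to `10.26`.
theorem le_padeFun {t : ℝ} (ht : t ∈ Set.Icc 10.26 10.27) : 0.00029 ≤ padeFun t := by
  have h8 : 2.26 ≤ t - 8 := by linarith [ht.1]
  have h9 : 1.26 ≤ t - 9 := by linarith [ht.1]
  have h12 : 1.73 ≤ 12 - t := by linarith [ht.2]
  have h0 : 0 < t := by linarith
  have hbase : (2.26 : ℝ) * 1.26 ^ 2 * 1.73 ^ 3 / 10.27 ^ 3 ≤
      (t - 8) * (t - 9) ^ 2 * (12 - t) ^ 3 / t ^ 3 := by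
    gcongr
    exact ht.2
  calc (0.00029 : ℝ) ≤ (2.26 * 1.26 ^ 2 * 1.73 ^ 3 / 10.27 ^ 3) ^ 2 := by norm_num
    _ ≤ padeFun t := pow_le_pow_left₀ (by norm_num) hbase 2

theorem intervalIntegrable_padeFun_pow_div (k : ℕ) {a b : ℝ} (ha : 0 < a) (hab : a ≤ b) :
    IntervalIntegrable (fun t => padeFun t ^ k / t) MeasureTheory.volume a b := by
  have h0 : ∀ t ∈ Set.Icc a b, t ≠ 0 := fun t ht => (ha.trans_le ht.1).ne'
  have h3 : ∀ t ∈ Set.Icc a b, t ^ 3 ≠ 0 := fun t ht => pow_ne_zero 3 (h0 t ht)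
  refine ContinuousOn.intervalIntegrable_of_Icc hab ?_
  unfold padeFun
  fun_prop (disch := assumption)

theorem abs_padeIntegral_le (k : ℕ) {a b c : ℝ} (ha : 0 < a) (hab : a ≤ b)
    (h : ∀ t ∈ Set.Icc a b, padeFun t ≤ c) : |padeIntegral k a b| ≤ c ^ k / a * (b - a) := by
  rw [← abs_of_nonneg (sub_nonneg.2 hab)]
  refine intervalIntegral.norm_integral_le_of_norm_le_const (E := ℝ)
    (f := fun t => padeFun t ^ k / t) fun t ht => ?_
  rw [Set.uIoc_of_le hab] at ht
  have hF := padeFun_nonneg t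
  have ht0 : 0 < t := ha.trans ht.1
  have hle := h t (Set.Ioc_subset_Icc_self ht)
  rw [Real.norm_of_nonneg (by positivity)]
  have hc : 0 ≤ c := hF.trans hle
  gcongr
  exact ht.1.le

theorem abs_padeIntegral_eight_nine_le (k : ℕ) :
    |padeIntegral k 8 9| ≤ (0.0136 ^ 2) ^ k / 8 := by
  refine (abs_padeIntegral_le k (by norm_num) (by norm_num) fun t ht =>
    padeFun_le_sq ⟨ht.1, by linarith [ht.2]⟩
      (mul_le_mul_cube_of_mem_Icc_eight_nine ht)).trans_eq ?_
  ring

theorem abs_padeIntegral_nine_twelve_le (k : ℕ) :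
    |padeIntegral k 9 12| ≤ (0.018 ^ 2) ^ k / 3 := by
  refine (abs_padeIntegral_le k (by norm_num) (by norm_num) fun t ht =>
    padeFun_le_sq ⟨by linarith [ht.1], ht.2⟩
      (mul_le_mul_cube_of_mem_Icc_nine_twelve ht)).trans_eq ?_
  ring

theorem le_padeIntegral_nine_twelve (k : ℕ) : 0.0009 * 0.00029 ^ k ≤ padeIntegral k 9 12 := by
  have hnonneg : ∀ t > 0, 0 ≤ padeFun t ^ k / t := fun t ht =>
    div_nonneg (pow_nonneg (padeFun_nonneg t) k) ht.le
  calc 0.0009 * 0.00029 ^ k ≤ ∫ _ in (10.26 : ℝ)..10.27, (0.00029 : ℝ) ^ k / 11 := by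
        have hpos : (0 : ℝ) < 0.00029 ^ k := by positivity
        rw [intervalIntegral.integral_const, smul_eq_mul]
        linarith
    _ ≤ ∫ t in (10.26 : ℝ)..10.27, padeFun t ^ k / t := by
        refine intervalIntegral.integral_mono_on (by norm_num) (by simp)
          (intervalIntegrable_padeFun_pow_div k (by norm_num) (by norm_num)) fun t ht => ?_
        have hF := le_padeFun ht
        have := padeFun_nonneg t
        have ht0 : 0 < t := by linarith [ht.1]
        gcongr
        linarith [ht.2]
    _ ≤ padeIntegral k 9 12 := by
        refine intervalIntegral.integral_mono_interval (by norm_num) (by norm_num) (by norm_num) ?_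
          (intervalIntegrable_padeFun_pow_div k (by norm_num) (by norm_num))
        refine MeasureTheory.ae_restrict_of_forall_mem measurableSet_Ioc fun t ht => ?_
        exact hnonneg t (by linarith [ht.1])

end Integrals

/-! ### Linear forms in the logarithms of 9/8 and 4/3 -/

theorem half_le_abs_or_eq_of_linear_forms {D c θ₁ θ₂ ε₁ ε₂ : ℝ} {p₁ p₂ : ℤ} (hD : D ≠ 0)
    (h₁ : D * ε₁ = D * c * θ₁ - p₁) (h₂ : D * ε₂ = D * c * θ₂ - p₂) (h l : ℤ)
    (hsmall : |D * (h * ε₁ + l * ε₂)| ≤ 1 / 2) :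
    1 / 2 ≤ |D * c * (h * θ₁ + l * θ₂)| ∨ c * (h * θ₁ + l * θ₂) = h * ε₁ + l * ε₂ := by
  have hsplit : D * c * (h * θ₁ + l * θ₂) =
      ((h * p₁ + l * p₂ : ℤ) : ℝ) + D * (h * ε₁ + l * ε₂) := by
    push_cast
    linear_combination -(h : ℝ) * h₁ - (l : ℝ) * h₂
  by_cases hz : h * p₁ + l * p₂ = 0
  · right
    rw [hz, Int.cast_zero, zero_add, mul_assoc] at hsplit
    exact mul_left_cancel₀ hD hsplit
  · left
    have hone : (1 : ℝ) ≤ |((h * p₁ + l * p₂ : ℤ) : ℝ)| := by exact_mod_cast Int.one_le_abs hz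
    rw [hsplit]
    linarith [abs_sub_abs_le_abs_add ((h * p₁ + l * p₂ : ℤ) : ℝ) (D * (h * ε₁ + l * ε₂))]

-- `7 / 4` is chosen because `1728 * 0.018 ^ 2 < 4 / 7`.
theorem abs_lcmUpto_mul_remainder_le_half (k : ℕ) {h l : ℝ} (hhl : |h| ≤ 3 * |l|)
    (hl : 2 * |l| ≤ (7 / 4) ^ k) :
    |Nat.lcmUpto (6 * k) * (h * padeIntegral k 8 9 + l * padeIntegral k 9 12)| ≤ 1 / 2 := by
  have hD : (Nat.lcmUpto (6 * k) : ℝ) ≤ 1728 ^ k := by exact_mod_cast lcmUpto_six_mul_le_pow k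
  have hε : |padeIntegral k 8 9| ≤ (0.018 ^ 2) ^ k / 8 :=
    (abs_padeIntegral_eight_nine_le k).trans (by gcongr; norm_num)
  have hδ := abs_padeIntegral_nine_twelve_le k
  calc |Nat.lcmUpto (6 * k) * (h * padeIntegral k 8 9 + l * padeIntegral k 9 12)|
      ≤ Nat.lcmUpto (6 * k) * (|h| * |padeIntegral k 8 9| + |l| * |padeIntegral k 9 12|) := by
        rw [abs_mul, Nat.abs_cast, ← abs_mul h, ← abs_mul l]
        gcongr
        exact abs_add_le _ _
    _ ≤ 1728 ^ k * (3 * |l| * ((0.018 ^ 2) ^ k / 8) + |l| * ((0.018 ^ 2) ^ k / 3)) := by gcongr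
    _ = 17 / 48 * (2 * |l|) * (1728 * 0.018 ^ 2) ^ k := by rw [mul_pow]; ring
    _ ≤ 17 / 48 * (7 / 4) ^ k * (4 / 7) ^ k := by gcongr; norm_num
    _ = 17 / 48 * (7 / 4 * (4 / 7)) ^ k := by rw [mul_pow]; ring
    _ ≤ 1 / 2 := by norm_num

-- The integral over `[9, 12]` is exponentially larger than the one over `[8, 9]`.
theorem le_abs_remainder {k : ℕ} (hk : 18 ≤ k) {h l : ℝ} (hl : 1 ≤ |l|) (hhl : |h| ≤ 3 * |l|) :
    0.0007 * 0.00029 ^ k ≤ |h * padeIntegral k 8 9 + l * padeIntegral k 9 12| := by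
  have hε : |padeIntegral k 8 9| ≤ 0.00005 * 0.00029 ^ k := by
    have hratio : (1 : ℝ) * (0.0136 ^ 2) ^ k ≤ 0.0004 * 0.00029 ^ k :=
      mul_pow_le_mul_pow_of_le (by norm_num) (by norm_num) (by norm_num) (by norm_num) hk
    linarith [abs_padeIntegral_eight_nine_le k]
  have hδ : 0.0009 * 0.00029 ^ k ≤ |padeIntegral k 9 12| :=
    (le_padeIntegral_nine_twelve k).trans (le_abs_self _)
  calc (0.0007 : ℝ) * 0.00029 ^ k ≤ |l| * (0.0007 * 0.00029 ^ k) :=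
        le_mul_of_one_le_left (by positivity) hl
    _ ≤ |l| * (0.0009 * 0.00029 ^ k) - 3 * |l| * (0.00005 * 0.00029 ^ k) := by
        have hpos : 0 ≤ |l| * (0.00029 : ℝ) ^ k := by positivity
        linarith
    _ ≤ |l| * |padeIntegral k 9 12| - |h| * |padeIntegral k 8 9| := by gcongr
    _ ≤ |h * padeIntegral k 8 9 + l * padeIntegral k 9 12| := by
        rw [← abs_mul, ← abs_mul, add_comm]
        exact abs_sub_abs_le_abs_add _ _

-- Both `1728 * 4800000000` and `4800000000 / 0.00029` stay below this bound for `exp 31`, with room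
-- for constant factors.
theorem exp_neg_mul_le_pow (k : ℕ) : Real.exp (-(31 * k)) ≤ (1 / 28000000000000 : ℝ) ^ k := by
  have hexp : (28000000000000 : ℝ) ≤ Real.exp 31 :=
    calc (28000000000000 : ℝ) ≤ 2.7182 ^ 31 := by norm_num
      _ ≤ Real.exp 1 ^ 31 := by gcongr; linarith [Real.exp_one_gt_d9]
      _ = Real.exp 31 := by rw [Real.exp_one_pow]; norm_num
  calc Real.exp (-(31 * k)) = (1 / Real.exp 31) ^ k := by
        rw [one_div, ← Real.exp_neg, ← Real.exp_nat_mul]; ring_nf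
    _ ≤ (1 / 28000000000000) ^ k := by gcongr

theorem exp_neg_mul_le_of_le_pow_mul {k m : ℕ} {A M y Λ : ℝ} (hM : 0 < M) (hA : 0 ≤ A)
    (hMy : M / 28000000000000 ≤ y) (hpow : (M / 28000000000000) ^ m ≤ A * y ^ m) (hmk : m ≤ k)
    (hΛ : A * y ^ k ≤ M ^ k * Λ) : Real.exp (-(31 * k)) ≤ Λ := by
  refine le_of_mul_le_mul_left ?_ (pow_pos hM k)
  calc M ^ k * Real.exp (-(31 * k)) ≤ M ^ k * (1 / 28000000000000) ^ k := by
        gcongr; exact exp_neg_mul_le_pow k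
    _ = 1 * (M / 28000000000000) ^ k := by rw [← mul_pow, mul_one_div, one_mul]
    _ ≤ A * y ^ k :=
        mul_pow_le_mul_pow_of_le (by positivity) hMy hA (by rwa [one_mul]) hmk
    _ ≤ M ^ k * Λ := hΛ

theorem exp_neg_mul_le_abs_log_nine_div_eight_add {k : ℕ} (hk : 18 ≤ k) {h l : ℤ} (hl : l ≠ 0)
    (hhl : |h| ≤ 3 * |l|) (hlk : 2 * |(l : ℝ)| ≤ (7 / 4) ^ k) :
    Real.exp (-(31 * k)) ≤ |h * Real.log (9 / 8) + l * Real.log (4 / 3)| := by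
  obtain ⟨p, hp⟩ := exists_lcmUpto_mul_padeIntegral_eq k (a := 8) (b := 9) (by norm_num)
    (by norm_num) (by norm_num) (by norm_num)
  obtain ⟨r, hr⟩ := exists_lcmUpto_mul_padeIntegral_eq k (a := 9) (b := 12) (by norm_num)
    (by norm_num) (by norm_num) (by norm_num)
  push_cast at hp hr
  rw [show (12 / 9 : ℝ) = 4 / 3 by norm_num] at hr
  have hc : |((padeNum k).coeff (6 * k) : ℝ)| ≤ 4800000000 ^ k := by
    exact_mod_cast abs_coeff_padeNum_le k
  have hD : (Nat.lcmUpto (6 * k) : ℝ) ≤ 1728 ^ k := by exact_mod_cast lcmUpto_six_mul_le_pow k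
  have hD0 : (Nat.lcmUpto (6 * k) : ℝ) ≠ 0 := by exact_mod_cast Nat.lcmUpto_ne_zero _
  have hhl' : |(h : ℝ)| ≤ 3 * |(l : ℝ)| := by exact_mod_cast hhl
  have hl1 : (1 : ℝ) ≤ |(l : ℝ)| := by exact_mod_cast Int.one_le_abs hl
  rcases half_le_abs_or_eq_of_linear_forms hD0 hp hr h l
    (abs_lcmUpto_mul_remainder_le_half k hhl' hlk) with hhalf | hzero
  · refine exp_neg_mul_le_of_le_pow_mul (M := 1728 * 4800000000) (A := 1 / 2) (y := 1) (m := 18)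
      (by norm_num) (by norm_num) (by norm_num) (by norm_num) hk ?_
    rw [one_pow, mul_one, mul_pow]
    rw [abs_mul, abs_mul, Nat.abs_cast] at hhalf
    exact hhalf.trans (by gcongr)
  · refine exp_neg_mul_le_of_le_pow_mul (M := 4800000000) (A := 0.0007) (y := 0.00029) (m := 18)
      (by norm_num) (by norm_num) (by norm_num) (by norm_num) hk ?_
    have hremainder := le_abs_remainder hk hl1 hhl'
    rw [← hzero, abs_mul] at hremainder
    exact hremainder.trans (by gcongr)

/-! ### Linear forms in the logarithms of 2 and 3 -/

theorem exp_one_half_le : Real.exp (1 / 2) ≤ 7 / 4 := by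
  refine le_of_sq_le_sq ?_ (by norm_num)
  calc Real.exp (1 / 2) ^ 2 = Real.exp 1 := by rw [← Real.exp_nat_mul]; norm_num
    _ ≤ (7 / 4) ^ 2 := by linarith [Real.exp_one_lt_d9]

theorem le_seven_div_four_pow {Y : ℝ} (hY : 0 < Y) {k : ℕ} (hk : 2 * Real.log Y ≤ k) :
    Y ≤ (7 / 4) ^ k :=
  calc Y = Real.exp (Real.log Y) := (Real.exp_log hY).symm
    _ ≤ Real.exp (k * (1 / 2)) := by gcongr; linarith
    _ = Real.exp (1 / 2) ^ k := Real.exp_nat_mul _ _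
    _ ≤ (7 / 4) ^ k := by gcongr; exact exp_one_half_le

theorem mul_log_two_add_mul_log_three (a b : ℝ) : a * Real.log 2 + b * Real.log 3 =
    (a + 2 * b) * Real.log (9 / 8) + (2 * a + 3 * b) * Real.log (4 / 3) := by
  rw [show (9 / 8 : ℝ) = 3 ^ 2 / 2 ^ 3 by norm_num, show (4 / 3 : ℝ) = 2 ^ 2 / 3 by norm_num,
    Real.log_div (by norm_num) (by norm_num), Real.log_div (by norm_num) (by norm_num),
    Real.log_pow, Real.log_pow, Real.log_pow]
  push_cast
  ring

theorem ne_zero_and_abs_le_of_abs_log_form_lt {h l : ℤ}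
    (h0 : h * Real.log (9 / 8) + l * Real.log (4 / 3) ≠ 0)
    (hlt : |h * Real.log (9 / 8) + l * Real.log (4 / 3)| < 1 / 20) :
    l ≠ 0 ∧ |h| ≤ 3 * |l| := by
  have h98 : 1 / 9 ≤ Real.log (9 / 8) :=
    le_trans (by norm_num) (Real.one_sub_inv_le_log_of_pos (by norm_num))
  have h43 : Real.log (4 / 3) ≤ 1 / 3 :=
    (Real.log_le_sub_one_of_pos (by norm_num)).trans (by norm_num)
  have h43' : 0 ≤ Real.log (4 / 3) := Real.log_nonneg (by norm_num)
  have hh : |(h : ℝ)| * (1 / 9) < |(l : ℝ)| * (1 / 3) + 1 / 20 :=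
    calc |(h : ℝ)| * (1 / 9) ≤ |h * Real.log (9 / 8)| := by
          rw [abs_mul, abs_of_nonneg (h98.trans' (by norm_num))]; gcongr
      _ ≤ |h * Real.log (9 / 8) + l * Real.log (4 / 3)| + |l * Real.log (4 / 3)| := by
          simpa using abs_sub (h * Real.log (9 / 8) + l * Real.log (4 / 3)) (l * Real.log (4 / 3))
      _ < |(l : ℝ)| * (1 / 3) + 1 / 20 := by
          rw [abs_mul (l : ℝ), abs_of_nonneg h43', add_comm]
          exact add_lt_add_of_le_of_lt (by gcongr) hlt
  have hint : |h| < 3 * |l| + 1 := by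
    have : |(h : ℝ)| < 3 * |(l : ℝ)| + 1 := by linarith
    exact_mod_cast this
  refine ⟨?_, Int.lt_add_one_iff.1 hint⟩
  rintro rfl
  have hzero : h = 0 := by simpa [Int.abs_lt_one_iff] using hint
  simp [hzero] at h0

theorem exp_neg_le_abs_log_nine_div_eight_add {Y : ℝ} (hY : Real.exp 9 ≤ Y) {h l : ℤ}
    (hl : 2 * |(l : ℝ)| ≤ Y) (h0 : h * Real.log (9 / 8) + l * Real.log (4 / 3) ≠ 0) :
    Real.exp (-(62 * Real.log Y + 31)) ≤ |h * Real.log (9 / 8) + l * Real.log (4 / 3)| := by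
  have hY0 : 0 < Y := (Real.exp_pos 9).trans_le hY
  have hlogY : 9 ≤ Real.log Y := (Real.le_log_iff_exp_le hY0).2 hY
  rcases lt_or_ge |h * Real.log (9 / 8) + l * Real.log (4 / 3)| (1 / 20) with hlt | hge
  · obtain ⟨hl0, hhl⟩ := ne_zero_and_abs_le_of_abs_log_form_lt h0 hlt
    set k := ⌈2 * Real.log Y⌉₊
    have hk : 2 * Real.log Y ≤ k := Nat.le_ceil _
    have hk18 : 18 ≤ k := by
      have : (18 : ℝ) ≤ k := by linarith
      exact_mod_cast this
    have hk1 : (k : ℝ) < 2 * Real.log Y + 1 := Nat.ceil_lt_add_one (by linarith)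
    calc Real.exp (-(62 * Real.log Y + 31)) ≤ Real.exp (-(31 * k)) := by gcongr; linarith
      _ ≤ _ := exp_neg_mul_le_abs_log_nine_div_eight_add hk18 hl0 hhl
          (hl.trans (le_seven_div_four_pow hY0 hk))
  · calc Real.exp (-(62 * Real.log Y + 31)) ≤ Real.exp (-(31 * (1 : ℕ))) := by
          gcongr; push_cast; linarith
      _ ≤ (1 / 28000000000000) ^ 1 := exp_neg_mul_le_pow 1
      _ ≤ 1 / 20 := by norm_num
      _ ≤ _ := hge

theorem exp_neg_le_abs_mul_log_two_add_mul_log_three {Y : ℝ} (hY : Real.exp 9 ≤ Y) {a b : ℤ}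
    (hab : 2 * |2 * (a : ℝ) + 3 * b| ≤ Y) (h0 : a * Real.log 2 + b * Real.log 3 ≠ 0) :
    Real.exp (-(62 * Real.log Y + 31)) ≤ |a * Real.log 2 + b * Real.log 3| := by
  rw [mul_log_two_add_mul_log_three] at h0 ⊢
  exact_mod_cast exp_neg_le_abs_log_nine_div_eight_add hY (h := a + 2 * b) (l := 2 * a + 3 * b)
    (by exact_mod_cast hab) (by exact_mod_cast h0)

/-! ### Growth of the Tribonacci sequence -/

theorem T_nonneg : ∀ n, 0 ≤ T n
  | 0 => le_rfl
  | 1 => zero_le_one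
  | 2 => zero_le_one
  | _ + 3 => add_nonneg (add_nonneg (T_nonneg _) (T_nonneg _)) (T_nonneg _)

theorem T_mono : Monotone T := by
  refine monotone_nat_of_le_succ fun n => ?_
  match n with
  | 0 | 1 => decide
  | n + 2 => linarith [T.eq_4 n, T_nonneg (n + 1), T_nonneg n]

theorem T_le_pow {α : ℝ} (hα : α ^ 3 = α ^ 2 + α + 1) (h1 : 1 ≤ α) : ∀ n, (T n : ℝ) ≤ α ^ n
  | 0 => by simp [T]
  | 1 => by simpa [T] using h1
  | 2 => by simpa only [T, Int.cast_one] using one_le_pow₀ h1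
  | n + 3 => by
    calc (T (n + 3) : ℝ) = T (n + 2) + T (n + 1) + T n := by rw [T]; push_cast; rfl
      _ ≤ α ^ (n + 2) + α ^ (n + 1) + α ^ n := by
          gcongr <;> exact T_le_pow hα h1 _
      _ = α ^ (n + 3) := by rw [pow_add α n 3, hα]; ring

theorem pow_le_T_add_two {α : ℝ} (hα : α ^ 3 = α ^ 2 + α + 1) (h0 : 0 ≤ α) (h2 : α ≤ 2) :
    ∀ n, α ^ n ≤ (T (n + 2) : ℝ)
  | 0 => by simp [T]
  | 1 => by simpa [T] using h2
  | 2 => by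
    have : α ^ 2 ≤ 2 ^ 2 := by gcongr
    norm_num [T]
    linarith
  | n + 3 => by
    calc α ^ (n + 3) = α ^ (n + 2) + α ^ (n + 1) + α ^ n := by rw [pow_add α n 3, hα]; ring
      _ ≤ T (n + 2 + 2) + T (n + 1 + 2) + T (n + 2) := by
          gcongr <;> exact pow_le_T_add_two hα h0 h2 _
      _ = T (n + 3 + 2) := by rw [T.eq_4 (n + 2)]; push_cast; rfl

theorem pow_le_T_sub_T {α : ℝ} (hα : α ^ 3 = α ^ 2 + α + 1) (h0 : 0 ≤ α) (h2 : α ≤ 2)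
    {m n : ℕ} (hmn : m < n + 4) : α ^ n ≤ T (n + 4) - T m := by
  have hle : T m ≤ T (n + 3) := T_mono (Nat.le_of_lt_succ hmn)
  have hrec : T (n + 4) = T (n + 3) + T (n + 2) + T (n + 1) := rfl
  have hT : T (n + 2) ≤ T (n + 4) - T m := by linarith [T_nonneg (n + 1)]
  exact (pow_le_T_add_two hα h0 h2 n).trans (by exact_mod_cast hT)

theorem mul_pow_lt_T_sub_T {α : ℝ} (hα : α ^ 3 = α ^ 2 + α + 1) (h0 : 0 < α) (h2 : α < 1.84)
    {m n : ℕ} (hn : 4 ≤ n) (hmn : m < n) : 0.08 * α ^ n < T n - T m := by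
  obtain ⟨n, rfl⟩ := Nat.exists_eq_add_of_le' hn
  have h4 : α ^ 4 < 1.84 ^ 4 := by gcongr
  have : 0 < α ^ n := pow_pos h0 n
  calc 0.08 * α ^ (n + 4) = 0.08 * α ^ 4 * α ^ n := by ring
    _ < 1 * α ^ n := by gcongr; linarith
    _ ≤ T (n + 4) - T m := by
        rw [one_mul]; exact pow_le_T_sub_T hα h0.le (by linarith) hmn

/-! ### Nearby integers of the form `2 ^ x * 3 ^ y` -/

theorem log_two_pow_mul_three_pow (x y : ℕ) :
    Real.log (2 ^ x * 3 ^ y) = x * Real.log 2 + y * Real.log 3 := by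
  rw [Real.log_mul (by positivity) (by positivity), Real.log_pow, Real.log_pow]

theorem two_mul_add_three_mul_le_log (x y : ℕ) :
    2 * (x : ℝ) + 3 * y ≤ 3 * Real.log (2 ^ x * 3 ^ y) := by
  have h2 : (x : ℝ) * (2 / 3) ≤ x * Real.log 2 := by
    gcongr; linarith [Real.log_two_gt_d9]
  have h3 : (y : ℝ) * 1 ≤ y * Real.log 3 := by
    gcongr; linarith [Real.log_three_gt_d9]
  rw [log_two_pow_mul_three_pow]
  linarith

theorem exp_neg_le_log_sub_log {x y x₁ y₁ : ℕ}
    (hX : Real.exp 9 ≤ 6 * Real.log (2 ^ x * 3 ^ y))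
    (hlt : (2 ^ x₁ * 3 ^ y₁ : ℝ) < 2 ^ x * 3 ^ y) :
    Real.exp (-(62 * Real.log (6 * Real.log (2 ^ x * 3 ^ y)) + 31)) ≤
      Real.log (2 ^ x * 3 ^ y) - Real.log (2 ^ x₁ * 3 ^ y₁) := by
  have hpos : (0 : ℝ) < 2 ^ x₁ * 3 ^ y₁ := by positivity
  have hlog := Real.log_lt_log hpos hlt
  have hform : Real.log (2 ^ x * 3 ^ y) - Real.log (2 ^ x₁ * 3 ^ y₁) =
      ((x - x₁ : ℤ) : ℝ) * Real.log 2 + ((y - y₁ : ℤ) : ℝ) * Real.log 3 := by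
    rw [log_two_pow_mul_three_pow, log_two_pow_mul_three_pow]
    push_cast
    ring
  have hbound : 2 * |2 * ((x - x₁ : ℤ) : ℝ) + 3 * ((y - y₁ : ℤ) : ℝ)| ≤
      6 * Real.log (2 ^ x * 3 ^ y) := by
    have hu := two_mul_add_three_mul_le_log x y
    have hv := two_mul_add_three_mul_le_log x₁ y₁
    have : (0 : ℝ) ≤ 2 * x + 3 * y := by positivity
    have : (0 : ℝ) ≤ 2 * x₁ + 3 * y₁ := by positivity
    have habs : |2 * ((x - x₁ : ℤ) : ℝ) + 3 * ((y - y₁ : ℤ) : ℝ)| ≤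
        3 * Real.log (2 ^ x * 3 ^ y) := by
      push_cast
      rw [abs_le]
      constructor <;> linarith
    linarith
  have hmain := exp_neg_le_abs_mul_log_two_add_mul_log_three hX hbound
    (by rw [← hform]; exact (sub_pos.2 hlog).ne')
  rwa [← hform, abs_of_pos (sub_pos.2 hlog)] at hmain

theorem log_sub_log_le {u v d : ℝ} (hv : 0 < v) (hd0 : 0 < d) (hd : u - v ≤ d)
    (hdu : 2 * d ≤ u) : Real.log u - Real.log v ≤ 2 * d / u := by
  have hu : 0 < u := by linarith
  calc Real.log u - Real.log v = Real.log (u / v) := (Real.log_div hu.ne' hv.ne').symm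
    _ ≤ u / v - 1 := Real.log_le_sub_one_of_pos (div_pos hu hv)
    _ = (u - v) / v := by field_simp
    _ ≤ d / (u / 2) := by gcongr; linarith
    _ = 2 * d / u := by field_simp

theorem log_six_lt : Real.log 6 < 2 := by
  rw [show (6 : ℝ) = 2 * 3 by norm_num, Real.log_mul (by norm_num) (by norm_num)]
  linarith [Real.log_two_lt_d9, Real.log_three_lt_d9]

theorem add_log_six_mul_lt {N X : ℝ} (hN : Real.exp 5 ≤ N) (hX : N + 60 * Real.log N ^ 2 ≤ X) :
    N + (62 * Real.log (6 * X) + 32) < X := by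
  have hN0 : 0 < N := (Real.exp_pos 5).trans_le hN
  have hL : 5 ≤ Real.log N := (Real.le_log_iff_exp_le hN0).2 hN
  have hN124 : 124 ≤ N :=
    calc (124 : ℝ) ≤ 2.7 ^ 5 := by norm_num
      _ ≤ Real.exp 1 ^ 5 := by gcongr; linarith [Real.exp_one_gt_d9]
      _ = Real.exp 5 := by rw [Real.exp_one_pow]; norm_num
      _ ≤ N := hN
  have hXN : 0 ≤ X - N := by linarith [sq_nonneg (Real.log N)]
  have hX0 : 0 < X := by linarith
  have hlogX : Real.log X ≤ Real.log N + (X - N) / 124 :=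
    calc Real.log X = Real.log N + Real.log (X / N) := by
          rw [Real.log_div hX0.ne' hN0.ne']; ring
      _ ≤ Real.log N + (X / N - 1) := by
          gcongr; exact Real.log_le_sub_one_of_pos (div_pos hX0 hN0)
      _ = Real.log N + (X - N) / N := by field_simp
      _ ≤ Real.log N + (X - N) / 124 := by gcongr
  rw [Real.log_mul (by norm_num) hX0.ne']
  nlinarith [log_six_lt]

theorem log_lt_of_sub_le_exp {x y x₁ y₁ : ℕ} {N : ℝ} (hN : Real.exp 5 ≤ N)
    (hlt : (2 ^ x₁ * 3 ^ y₁ : ℝ) < 2 ^ x * 3 ^ y)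
    (hle : (2 ^ x * 3 ^ y - 2 ^ x₁ * 3 ^ y₁ : ℝ) ≤ Real.exp N) :
    Real.log (2 ^ x * 3 ^ y) < N + 60 * Real.log N ^ 2 := by
  by_contra! hX
  have hgap := add_log_six_mul_lt hN hX
  set X := Real.log (2 ^ x * 3 ^ y)
  have hexp : Real.exp X = 2 ^ x * 3 ^ y := Real.exp_log (by positivity)
  have hN0 : 0 < N := (Real.exp_pos 5).trans_le hN
  have hL : 5 ^ 2 ≤ Real.log N ^ 2 := by gcongr; exact (Real.le_log_iff_exp_le hN0).2 hN
  have hX9 : Real.exp 9 ≤ 6 * X :=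
    calc Real.exp 9 = Real.exp 1 ^ 9 := by rw [Real.exp_one_pow]; norm_num
      _ ≤ 2.7183 ^ 9 := by gcongr; linarith [Real.exp_one_lt_d9]
      _ ≤ 6 * (60 * 5 ^ 2) := by norm_num
      _ ≤ 6 * X := by linarith
  have htwo : 2 * Real.exp N ≤ Real.exp (N + 1) := by
    rw [Real.exp_add, mul_comm]
    gcongr
    linarith [Real.exp_one_gt_d9]
  have hupper : X - Real.log (2 ^ x₁ * 3 ^ y₁) ≤ Real.exp (N + 1 - X) :=
    calc X - Real.log (2 ^ x₁ * 3 ^ y₁) ≤ 2 * Real.exp N / (2 ^ x * 3 ^ y) := by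
          refine log_sub_log_le (by positivity) (Real.exp_pos N) hle ?_
          rw [← hexp]
          exact htwo.trans (Real.exp_le_exp.2 (by linarith))
      _ ≤ Real.exp (N + 1) / Real.exp X := by rw [hexp]; gcongr
      _ = Real.exp (N + 1 - X) := (Real.exp_sub _ _).symm
  have hexponents := Real.exp_le_exp.1 ((exp_neg_le_log_sub_log hX9 hlt).trans hupper)
  linarith

theorem exp_five_le_mul_log {α : ℝ} (hα : 1.83 < α) {n : ℕ} (hn : 310 < n) :
    Real.exp 5 ≤ n * Real.log α := by
  have hlog : 1 / 2 ≤ Real.log α := by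
    rw [Real.le_log_iff_exp_le (by linarith)]
    linarith [exp_one_half_le]
  have hn' : (311 : ℝ) ≤ n := by exact_mod_cast hn
  calc Real.exp 5 = Real.exp 1 ^ 5 := by rw [Real.exp_one_pow]; norm_num
    _ ≤ 2.7183 ^ 5 := by gcongr; linarith [Real.exp_one_lt_d9]
    _ ≤ 311 * (1 / 2) := by norm_num
    _ ≤ n * Real.log α := by gcongr

theorem mul_log_sub_three_lt_log {α u : ℝ} {n : ℕ} (hα : 0 < α) (h : 0.08 * α ^ n < u) :
    n * Real.log α - 3 < Real.log u := by
  have hconst : -3 < Real.log 0.08 := by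
    rw [show (0.08 : ℝ) = 2 / 5 ^ 2 by norm_num, Real.log_div (by norm_num) (by norm_num),
      Real.log_pow]
    push_cast
    linarith [Real.log_two_gt_d9, Real.log_five_lt_d9]
  have hlog := Real.log_lt_log (by positivity) h
  rw [Real.log_mul (by norm_num) (by positivity), Real.log_pow] at hlog
  linarith

theorem exp_add_mul_log_sq {N : ℝ} (hN : 0 < N) (c : ℝ) :
    Real.exp (N + c * Real.log N ^ 2) = Real.exp N * N ^ (c * Real.log N) := by
  rw [Real.rpow_def_of_pos hN, ← Real.exp_add]
  ring_nf

theorem size_of_S_unit_part (α : ℝ) (hα : α ^ 3 = α ^ 2 + α + 1)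
    (hα1 : 1.83 < α) (hα2 : α < 1.84)
    (n n₁ x x₁ y y₁ : ℕ) (hn : 310 < n) (hnn : n₁ < n)
    (h : T n - 2 ^ x * 3 ^ y = T n₁ - 2 ^ x₁ * 3 ^ y₁) :
    (0.08 * α ^ n < (2 ^ x * 3 ^ y : ℝ) ∧
        (2 ^ x * 3 ^ y : ℝ) <
          α ^ n * ((n : ℝ) * Real.log α) ^ (60 * Real.log ((n : ℝ) * Real.log α))) ∧
      ((n : ℝ) * Real.log α - 3 < (x : ℝ) * Real.log 2 + (y : ℝ) * Real.log 3 ∧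
        (x : ℝ) * Real.log 2 + (y : ℝ) * Real.log 3 <
          (n : ℝ) * Real.log α + 60 * Real.log ((n : ℝ) * Real.log α) ^ 2) := by
  have hα0 : 0 < α := by linarith
  have hpow : Real.exp (n * Real.log α) = α ^ n := by rw [Real.exp_nat_mul, Real.exp_log hα0]
  have hN := exp_five_le_mul_log hα1 hn
  have hdiff : (2 ^ x * 3 ^ y - 2 ^ x₁ * 3 ^ y₁ : ℝ) = T n - T n₁ := by
    have : (T n - 2 ^ x * 3 ^ y : ℝ) = T n₁ - 2 ^ x₁ * 3 ^ y₁ := by exact_mod_cast h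
    linarith
  have hgap : 0.08 * α ^ n < 2 ^ x * 3 ^ y - 2 ^ x₁ * 3 ^ y₁ :=
    (mul_pow_lt_T_sub_T hα hα0 hα2 (by lia) hnn).trans_eq hdiff.symm
  have hle : (2 ^ x * 3 ^ y - 2 ^ x₁ * 3 ^ y₁ : ℝ) ≤ Real.exp (n * Real.log α) := by
    have : (0 : ℝ) ≤ T n₁ := by exact_mod_cast T_nonneg n₁
    linarith [T_le_pow hα (by linarith) n]
  have hlower : 0.08 * α ^ n < (2 ^ x * 3 ^ y : ℝ) :=
    hgap.trans (sub_lt_self _ (by positivity))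
  have hupper := log_lt_of_sub_le_exp hN (sub_pos.1 (hgap.trans' (by positivity))) hle
  rw [← log_two_pow_mul_three_pow, ← hpow, ← exp_add_mul_log_sq ((Real.exp_pos 5).trans_le hN),
    hpow, ← Real.log_lt_iff_lt_exp (by positivity)]
  exact ⟨⟨hlower, hupper⟩, mul_log_sub_three_lt_log hα0 hlower, hupper⟩
end
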